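/- Let P ⊆ Φ_{B_n} be a signed poset such that no connected ideal of P intersects two or more other connected ideals of P nontrivially (i.e., P is an initial complete intersection). Then for every x ∈ ℝ^n such that ⟨x, χ_J⟩ ≠ 0 for every nonempty ideal J of P: Σ_{w ∈ 𝓛(P)} ∏_{m=1}^n ⟨x, χ_{J^w_m}⟩^{−1} = (∏_{{J,K} ∈ Π(P)} ⟨x, χ_J + χ_K⟩) / (∏_{J ∈ J_conn(P)} ⟨x, χ_J⟩). -/

import Mathlib

open scoped Classical

noncomputable section

/-- Signed index set `±[n]`: `(true, i)` represents `+i`, `(false, i)` represents `-i`. -/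
abbrev SIdx (n : ℕ) := Bool × Fin n

/-- Negation `a ↦ -a` on `±[n]`. -/
def negS {n : ℕ} (a : SIdx n) : SIdx n := (!a.1, a.2)

/-- Standard basis vector `e_i` of `ℝ^n`. -/
def stdB (n : ℕ) (i : Fin n) : Fin n → ℝ := Pi.single i 1

/-- `rsgn true = 1`, `rsgn false = -1`. -/
def rsgn (s : Bool) : ℝ := if s then 1 else -1

/-- `v(a)` for `a ∈ ±[n]`: `v(+i) = e_i`, `v(-i) = -e_i`. -/
def vS {n : ℕ} (a : SIdx n) : Fin n → ℝ := rsgn a.1 • stdB n a.2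

/-- `v` on `±[n] ∪ {0}` (with `none` playing the role of `0`). -/
def vO {n : ℕ} : Option (SIdx n) → (Fin n → ℝ)
  | none => 0
  | some a => vS a

/-- Negation on `±[n] ∪ {0}`, fixing `0`. -/
def negO {n : ℕ} : Option (SIdx n) → Option (SIdx n)
  | none => none
  | some a => some (negS a)

/-- Standard inner product on `ℝ^n`. -/
def dotR {n : ℕ} (x y : Fin n → ℝ) : ℝ := ∑ i, x i * y i

/-- The type `B_n` root system `Φ_{B_n}`. -/
def BnRoots (n : ℕ) : Set (Fin n → ℝ) :=
  {α | (∃ i j : Fin n, i < j ∧ ∃ s t : Bool, α = rsgn s • stdB n i + rsgn t • stdB n j) ∨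
    ∃ i : Fin n, ∃ s : Bool, α = rsgn s • stdB n i}

/-- The positive roots `Φ⁺_{B_n}`. -/
def BnPos (n : ℕ) : Set (Fin n → ℝ) :=
  {α | (∃ i j : Fin n, i < j ∧ ∃ t : Bool, α = stdB n i + rsgn t • stdB n j) ∨
    ∃ i : Fin n, α = stdB n i}

/-- The type `C_n` root system `Φ_{C_n}`. -/
def CnRoots (n : ℕ) : Set (Fin n → ℝ) :=
  {α | (∃ i j : Fin n, i < j ∧ ∃ s t : Bool, α = rsgn s • stdB n i + rsgn t • stdB n j) ∨
    ∃ i : Fin n, ∃ s : Bool, α = (2 * rsgn s) • stdB n i}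

/-- Nonnegative real linear combinations of elements of `S`. -/
def nnSpan {n : ℕ} (S : Set (Fin n → ℝ)) : Set (Fin n → ℝ) :=
  {x | ∃ (r : ℕ) (c : Fin r → ℝ) (β : Fin r → (Fin n → ℝ)),
    (∀ m, 0 ≤ c m) ∧ (∀ m, β m ∈ S) ∧ x = ∑ m, c m • β m}

/-- A signed poset: a subset of `Φ_{B_n}`, antisymmetric and closed under positive
linear combinations remaining in `Φ_{B_n}`. -/
def IsSignedPoset (n : ℕ) (P : Set (Fin n → ℝ)) : Prop :=
  P ⊆ BnRoots n ∧ (∀ α ∈ P, -α ∉ P) ∧ ∀ α ∈ BnRoots n, α ∈ nnSpan P → α ∈ P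

/-- A `C_n`-signed poset. -/
def IsCnSignedPoset (n : ℕ) (Q : Set (Fin n → ℝ)) : Prop :=
  Q ⊆ CnRoots n ∧ (∀ α ∈ Q, -α ∉ Q) ∧ ∀ α ∈ CnRoots n, α ∈ nnSpan Q → α ∈ Q

/-- The root cone `K^rt_P`. -/
def rootCone {n : ℕ} (P : Set (Fin n → ℝ)) : Set (Fin n → ℝ) := nnSpan P

/-- The weight cone `K^wt_P`. -/
def weightCone {n : ℕ} (P : Set (Fin n → ℝ)) : Set (Fin n → ℝ) :=
  {f | ∀ α ∈ P, 0 ≤ dotR f α}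

/-- The Fischer (strict) order on `±[n] ∪ {0}`:
`a < b` iff `v(a) - v(b) ∈ P`, or (`b = -a ≠ 0` and `v(a) ∈ P`). -/
def fLT {n : ℕ} (P : Set (Fin n → ℝ)) (a b : Option (SIdx n)) : Prop :=
  vO a - vO b ∈ P ∨ (a ≠ none ∧ b = negO a ∧ vO a ∈ P)

/-- A subset of `±[n]` is isotropic if it contains no pair `{i, -i}`. -/
def Isotropic {n : ℕ} (J : Finset (SIdx n)) : Prop :=
  ∀ i : Fin n, ¬((true, i) ∈ J ∧ (false, i) ∈ J)

/-- Signed characteristic vector of a subset of `±[n]`. -/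
def chiF {n : ℕ} (J : Finset (SIdx n)) : Fin n → ℝ := fun i =>
  if (true, i) ∈ J then 1 else if (false, i) ∈ J then -1 else 0

/-- `J` is an ideal of the signed poset `P`. -/
def IsIdeal {n : ℕ} (P : Set (Fin n → ℝ)) (J : Finset (SIdx n)) : Prop :=
  Isotropic J ∧ ∀ α ∈ P, 0 ≤ dotR (chiF J) α

/-- Comparability in the Fischer order of `P`. -/
def fComp {n : ℕ} (P : Set (Fin n → ℝ)) (a b : SIdx n) : Prop :=
  fLT P (some a) (some b) ∨ fLT P (some b) (some a)

/-- One step in the comparability graph on a subset `J` of `±[n]`. -/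
def connStep {n : ℕ} (P : Set (Fin n → ℝ)) (J : Finset (SIdx n)) (a b : SIdx n) : Prop :=
  a ∈ J ∧ b ∈ J ∧ fComp P a b

/-- `J` is connected: nonempty, and any two of its elements are joined by a path inside `J`
in the comparability graph of the Fischer order of `P`. -/
def IsConnectedIdl {n : ℕ} (P : Set (Fin n → ℝ)) (J : Finset (SIdx n)) : Prop :=
  J.Nonempty ∧ ∀ a ∈ J, ∀ b ∈ J, Relation.ReflTransGen (connStep P J) a b

/-- A connected ideal of `P`. -/
def IsConnIdeal {n : ℕ} (P : Set (Fin n → ℝ)) (J : Finset (SIdx n)) : Prop :=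
  IsIdeal P J ∧ IsConnectedIdl P J

/-- Support `supp J = {|a| : a ∈ J}`. -/
def suppF {n : ℕ} (J : Finset (SIdx n)) : Finset (Fin n) := J.image Prod.snd

/-- `J` and `K` intersect nontrivially. -/
def NontrivInter {n : ℕ} (J K : Finset (SIdx n)) : Prop :=
  (suppF J ∩ suppF K).Nonempty ∧ ¬J ⊆ K ∧ ¬K ⊆ J

/-- `J` and `K` intersect trivially. -/
def TrivInter {n : ℕ} (J K : Finset (SIdx n)) : Prop := ¬NontrivInter J K

/-- A signed permutation, as an anti-symmetric bijection of `±[n]`. -/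
def IsSPerm {n : ℕ} (w : SIdx n ≃ SIdx n) : Prop := ∀ a, w (negS a) = negS (w a)

/-- Linear action of a signed permutation on `ℝ^n`, determined by `w(e_i) = v(w(+i))`. -/
def spAct {n : ℕ} (w : SIdx n ≃ SIdx n) (x : Fin n → ℝ) : Fin n → ℝ :=
  ∑ i, x i • vS (w (true, i))

/-- `w` is a linear extension of `P`: a signed permutation with `P ⊆ w(Φ⁺_{B_n})`. -/
def IsLinExt {n : ℕ} (P : Set (Fin n → ℝ)) (w : SIdx n ≃ SIdx n) : Prop :=
  IsSPerm w ∧ ∀ α ∈ P, ∃ β ∈ BnPos n, α = spAct w β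

/-- The (finite) set `𝓛(P)` of linear extensions of `P`. -/
def linExts (n : ℕ) (P : Set (Fin n → ℝ)) : Finset (SIdx n ≃ SIdx n) :=
  Finset.univ.filter (IsLinExt P)

/-- Simple roots of `Φ_{B_n}`: `α_i = e_i - e_{i+1}` for `i < n - 1`, `α_{n-1} = e_{n-1}`
(0-indexed). -/
def simpleRoot (n : ℕ) (i : Fin n) : Fin n → ℝ := fun j =>
  (if j = i then (1 : ℝ) else 0) - if (j : ℕ) = (i : ℕ) + 1 then 1 else 0

/-- `J^w_m = {w(1), …, w(m)}` (0-indexed: the images under `w` of `+1, …, +(m+1)`). -/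
def JwSet {n : ℕ} (w : SIdx n ≃ SIdx n) (m : Fin n) : Finset (SIdx n) :=
  (Finset.univ.filter (fun j : Fin n => j ≤ m)).image (fun j => w (true, j))

/-- An extensible ideal of `P`. -/
def Extensible (n : ℕ) (P : Set (Fin n → ℝ)) (J : Finset (SIdx n)) : Prop :=
  ∃ I : Finset (SIdx n), I.Nonempty ∧ Disjoint I J ∧
    IsIdeal P (J ∪ I) ∧ IsIdeal P (J ∪ I.image negS)

/-- The finite set `J_conn(P)` of connected ideals of `P`. -/
def JconnF (n : ℕ) (P : Set (Fin n → ℝ)) : Finset (Finset (SIdx n)) :=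
  Finset.univ.filter (IsConnIdeal P)

/-- Membership in `Π(P)`: an unordered pair of nontrivially intersecting connected ideals. -/
def inPiP {n : ℕ} (P : Set (Fin n → ℝ)) (p : Sym2 (Finset (SIdx n))) : Prop :=
  ∃ J K : Finset (SIdx n),
    p = s(J, K) ∧ IsConnIdeal P J ∧ IsConnIdeal P K ∧ NontrivInter J K

/-- The finite set `Π(P)` of unordered pairs of nontrivially intersecting connected ideals. -/
def PiP (n : ℕ) (P : Set (Fin n → ℝ)) : Finset (Sym2 (Finset (SIdx n))) :=
  Finset.univ.filter (inPiP P)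

/-- No connected ideal of `P` intersects two or more other connected ideals nontrivially. -/
def NoDoubleNontriv (n : ℕ) (P : Set (Fin n → ℝ)) : Prop :=
  ∀ J K K' : Finset (SIdx n), IsConnIdeal P J → IsConnIdeal P K → IsConnIdeal P K' →
    NontrivInter J K → NontrivInter J K' → K = K'

/-- The connected component of `a` inside `J` (w.r.t. the Fischer comparability graph). -/
def componentIn {n : ℕ} (P : Set (Fin n → ℝ)) (J : Finset (SIdx n)) (a : SIdx n) :
    Finset (SIdx n) :=
  J.filter (fun b => Relation.ReflTransGen (connStep P J) a b)

/-- The set of connected components of `J`. -/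
def componentsOf {n : ℕ} (P : Set (Fin n → ℝ)) (J : Finset (SIdx n)) :
    Finset (Finset (SIdx n)) :=
  J.image (componentIn P J)

/-- The signed support `supp±(f) = {sgn(f_i)·i : f_i ≠ 0}` of a vector `f ∈ ℝ^n`. -/
def suppPM {n : ℕ} (f : Fin n → ℝ) : Finset (SIdx n) :=
  Finset.univ.filter (fun a : SIdx n => if a.1 then 0 < f a.2 else f a.2 < 0)

/-- Index type for the variables `U_J`, `J` a connected ideal of `P`. -/
abbrev ConnIdx (n : ℕ) (P : Set (Fin n → ℝ)) := {J : Finset (SIdx n) // IsConnIdeal P J}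

/-- Integer signed characteristic vector, as an exponent vector for Laurent monomials. -/
def chiZ {n : ℕ} (J : Finset (SIdx n)) : Fin n →₀ ℤ :=
  Finsupp.equivFunOnFinite.symm (fun i =>
    if (true, i) ∈ J then 1 else if (false, i) ∈ J then -1 else 0)

/-- The map `φ : k[U_J : J ∈ J_conn(P)] → k[x_1^{±1}, …, x_n^{±1}]`, `U_J ↦ x^{χ_J}`. -/
def phiWt (n : ℕ) (P : Set (Fin n → ℝ)) (k : Type) [Field k] :
    MvPolynomial (ConnIdx n P) k →ₐ[k] AddMonoidAlgebra k (Fin n →₀ ℤ) :=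
  MvPolynomial.aeval (fun J => AddMonoidAlgebra.single (chiZ J.val) 1)

/-- The binomial `syz(U_J, U_K) = U_J U_K - (∏_A U_A) (∏_B U_B)`, where `A` runs over the
connected components of `J ∩ K` and `B` over the connected components of `supp±(χ_J + χ_K)`. -/
def syzPoly (n : ℕ) (P : Set (Fin n → ℝ)) (k : Type) [Field k] (J K : ConnIdx n P) :
    MvPolynomial (ConnIdx n P) k :=
  MvPolynomial.X J * MvPolynomial.X K -
    (∏ A ∈ Finset.univ.filter
        (fun A : ConnIdx n P => (A : Finset (SIdx n)) ∈ componentsOf P (J.val ∩ K.val)),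
        MvPolynomial.X A) *
      ∏ B ∈ Finset.univ.filter
        (fun B : ConnIdx n P =>
          (B : Finset (SIdx n)) ∈ componentsOf P (suppPM (chiF J.val + chiF K.val))),
        MvPolynomial.X B

/-- `θ_1, …, θ_r` is a regular sequence: the ideal it generates is proper, and each `θ_{m+1}`
is a non-zero-divisor modulo the ideal generated by `θ_1, …, θ_m`. -/
def IsRegSeq {R : Type} [CommRing R] {r : ℕ} (θ : Fin r → R) : Prop :=
  Ideal.span (Set.range θ) ≠ ⊤ ∧
    ∀ (m : ℕ) (hm : m < r) (x : R),
      θ ⟨m, hm⟩ * x ∈ Ideal.span (θ '' {j : Fin r | (j : ℕ) < m}) →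
        x ∈ Ideal.span (θ '' {j : Fin r | (j : ℕ) < m})

/-- The induced signed poset `P_A = P ∩ span_ℝ{e_i : i ∈ A}`. -/
def inducedPoset (n : ℕ) (P : Set (Fin n → ℝ)) (A : Finset (Fin n)) : Set (Fin n → ℝ) :=
  {α | α ∈ P ∧ α ∈ Submodule.span ℝ (stdB n '' (A : Set (Fin n)))}

/-- The major index of a signed permutation. -/
def majB {n : ℕ} (w : SIdx n ≃ SIdx n) : ℕ :=
  ∑ i ∈ Finset.univ.filter
      (fun i : Fin n => spAct w (simpleRoot n i) ∉ BnPos n), ((i : ℕ) + 1)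

/-- `[m]_q = 1 + q + ⋯ + q^{m-1}` in `ℤ[q]`. -/
def qInt (m : ℕ) : Polynomial ℤ := ∑ t ∈ Finset.range m, Polynomial.X ^ t

/-- The symmetric function `{J, K} ↦ ⟨x, χ_J + χ_K⟩` on unordered pairs. -/
def pairDot {n : ℕ} (x : Fin n → ℝ) : Sym2 (Finset (SIdx n)) → ℝ :=
  Sym2.lift ⟨fun J K => dotR x (chiF J + chiF K),
    fun J K => congrArg (dotR x) (add_comm (chiF J) (chiF K))⟩

/-- The symmetric function `{J, K} ↦ [|J| + |K|]_q` on unordered pairs. -/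
def pairQ {n : ℕ} : Sym2 (Finset (SIdx n)) → Polynomial ℤ :=
  Sym2.lift ⟨fun J K => qInt (J.card + K.card),
    fun J K => congrArg qInt (Nat.add_comm J.card K.card)⟩

/-- The principal order ideal `I_≤(a)` in the Fischer order restricted to `±[n]`. -/
def Ile {n : ℕ} (P : Set (Fin n → ℝ)) (a : SIdx n) : Set (SIdx n) :=
  {b | b = a ∨ fLT P (some b) (some a)}

/-- A set of signed indices is isotropic if it contains no pair `{i, -i}`. -/
def IsoSet {n : ℕ} (S : Set (SIdx n)) : Prop :=
  ∀ i : Fin n, ¬((true, i) ∈ S ∧ (false, i) ∈ S)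

/-- A covering pair of the Fischer order of `P`. -/
def CovPair {n : ℕ} (P : Set (Fin n → ℝ)) (a b : Option (SIdx n)) : Prop :=
  fLT P a b ∧ ¬∃ c : Option (SIdx n), fLT P a c ∧ fLT P c b

/-- The set of covering roots of `P`. -/
def covRoots {n : ℕ} (P : Set (Fin n → ℝ)) : Set (Fin n → ℝ) :=
  {x | ∃ a b : Option (SIdx n), CovPair P a b ∧ x = vO a - vO b}

/-- The set `J_ε = {i : ε_i = 1} ∪ {-i : ε_i = -1}` attached to a `{-1,0,1}`-vector. -/
def Jeps {n : ℕ} (ε : Fin n → ℝ) : Set (SIdx n) :=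
  {a | (a.1 = true ∧ ε a.2 = 1) ∨ (a.1 = false ∧ ε a.2 = -1)}

/-! ### Part 1: Fischer order facts -/

/-- Fischer order restricted to `±[n]`. -/
def sLT {n : ℕ} (P : Set (Fin n → ℝ)) (a b : SIdx n) : Prop := fLT P (some a) (some b)

lemma negS_negS {n : ℕ} (a : SIdx n) : negS (negS a) = a := by
  simp [negS]

lemma vS_negS {n : ℕ} (a : SIdx n) : vS (negS a) = - vS a := by
  rcases a with ⟨s, i⟩
  cases s <;> simp [negS, vS, rsgn]

lemma vS_apply {n : ℕ} (a : SIdx n) (i : Fin n) :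
    vS a i = if i = a.2 then rsgn a.1 else 0 := by
  simp [vS, stdB, Pi.single_apply]

lemma snd_eq_cases {n : ℕ} {a b : SIdx n} (h : a.2 = b.2) : b = a ∨ b = negS a := by
  rcases a with ⟨s, i⟩
  rcases b with ⟨t, j⟩
  simp only at h
  subst h
  cases s <;> cases t <;> simp [negS]

lemma rsgn_cases (s : Bool) : rsgn s = 1 ∨ rsgn s = -1 := by
  cases s <;> simp [rsgn]

lemma rsgn_not (s : Bool) : rsgn (!s) = - rsgn s := by
  cases s <;> simp [rsgn]

lemma root_cases {n : ℕ} {α : Fin n → ℝ} (h : α ∈ BnRoots n) :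
    (∃ a b : SIdx n, a.2 ≠ b.2 ∧ α = vS a - vS b) ∨ ∃ a : SIdx n, α = vS a := by
  rcases h with ⟨i, j, hij, s, t, rfl⟩ | ⟨i, s, rfl⟩
  · left
    refine ⟨(s, i), (!t, j), hij.ne, ?_⟩
    simp [vS, rsgn_not]
  · right
    exact ⟨(s, i), rfl⟩

lemma root_sub {n : ℕ} {a b : SIdx n} (h : a.2 ≠ b.2) : vS a - vS b ∈ BnRoots n := by
  left
  rcases lt_or_gt_of_ne h with h | h
  · refine ⟨a.2, b.2, h, a.1, !b.1, ?_⟩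
    simp [vS, rsgn_not, sub_eq_add_neg]
  · refine ⟨b.2, a.2, h, !b.1, a.1, ?_⟩
    simp [vS, rsgn_not, sub_eq_add_neg, add_comm]

lemma root_vS {n : ℕ} (a : SIdx n) : vS a ∈ BnRoots n := Or.inr ⟨a.2, a.1, rfl⟩

lemma root_abs_le {n : ℕ} {α : Fin n → ℝ} (h : α ∈ BnRoots n) (i : Fin n) : |α i| ≤ 1 := by
  rcases root_cases h with ⟨a, b, hab, rfl⟩ | ⟨a, rfl⟩
  · rw [Pi.sub_apply, vS_apply, vS_apply]
    rcases rsgn_cases a.1 with h1 | h1 <;> rcases rsgn_cases b.1 with h2 | h2 <;>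
      rw [h1, h2] <;> by_cases h3 : i = a.2 <;> by_cases h4 : i = b.2 <;>
      simp [h3, h4] <;> simp_all
  · rw [vS_apply]
    rcases rsgn_cases a.1 with h1 | h1 <;> rw [h1] <;> split_ifs <;> simp

section Order
variable {n : ℕ} {P : Set (Fin n → ℝ)}

lemma comb_mem (hP : IsSignedPoset n P) {α β γ : Fin n → ℝ} (hα : α ∈ P) (hβ : β ∈ P)
    (c d : ℝ) (hc : 0 ≤ c) (hd : 0 ≤ d) (hγ : γ ∈ BnRoots n) (h : γ = c • α + d • β) : γ ∈ P := by
  refine hP.2.2 γ hγ ⟨2, ![c, d], ![α, β], ?_, ?_, ?_⟩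
  · intro m; fin_cases m <;> simpa
  · intro m; fin_cases m <;> simpa
  · simp [h]

lemma zero_notMem (hP : IsSignedPoset n P) : (0 : Fin n → ℝ) ∉ P := by
  intro h
  exact hP.2.1 0 h (by simpa using h)

lemma sLT_iff (hP : IsSignedPoset n P) (a b : SIdx n) :
    sLT P a b ↔ (a.2 ≠ b.2 ∧ vS a - vS b ∈ P) ∨ (b = negS a ∧ vS a ∈ P) := by
  unfold sLT fLT
  simp only [vO, negO, ne_eq, reduceCtorEq, not_false_eq_true, Option.some.injEq, true_and]
  constructor
  · rintro (h | h)
    · by_cases h2 : a.2 = b.2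
      · exfalso
        rcases snd_eq_cases h2 with rfl | rfl
        · rw [sub_self] at h
          exact zero_notMem hP h
        · rw [vS_negS] at h
          have := root_abs_le (hP.1 h) a.2
          simp only [sub_neg_eq_add, Pi.add_apply, vS_apply, if_true] at this
          rcases rsgn_cases a.1 with h1 | h1 <;> rw [h1] at this <;> norm_num [abs_le] at this
      · exact Or.inl ⟨h2, h⟩
    · exact Or.inr h
  · rintro (h | h)
    · exact Or.inl h.2
    · exact Or.inr h

lemma sLT_neg (hP : IsSignedPoset n P) {a b : SIdx n} (h : sLT P a b) :
    sLT P (negS b) (negS a) := by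
  rw [sLT_iff hP] at h ⊢
  rcases h with ⟨h1, h2⟩ | ⟨rfl, h2⟩
  · left
    refine ⟨fun h => h1 h.symm, ?_⟩
    rw [vS_negS, vS_negS]
    convert h2 using 1
    abel
  · right
    simpa only [negS_negS, true_and] using h2

lemma sLT_irrefl (hP : IsSignedPoset n P) (a : SIdx n) : ¬ sLT P a a := by
  rw [sLT_iff hP]
  rintro (h | ⟨h, -⟩)
  · exact h.1 rfl
  · rcases a with ⟨s, i⟩
    cases s <;> simp [negS] at h

lemma sLT_trans (hP : IsSignedPoset n P) {a b c : SIdx n} (h1 : sLT P a b) (h2 : sLT P b c) :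
    sLT P a c := by
  rw [sLT_iff hP] at h1 h2 ⊢
  rcases h1 with ⟨hab, h1⟩ | ⟨rfl, h1⟩ <;> rcases h2 with ⟨hbc, h2⟩ | ⟨rfl, h2⟩
  · by_cases hac : a.2 = c.2
    · rcases snd_eq_cases hac with rfl | rfl
      · exfalso
        refine hP.2.1 _ h1 ?_
        rwa [neg_sub]
      · right
        refine ⟨rfl, comb_mem hP h1 h2 (1/2) (1/2) (by norm_num) (by norm_num) (root_vS a) ?_⟩
        rw [vS_negS]
        module
    · left
      refine ⟨hac, comb_mem hP h1 h2 1 1 zero_le_one zero_le_one (root_sub hac) ?_⟩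
      module
  · left
    have : a.2 ≠ (negS b).2 := hab
    refine ⟨this, comb_mem hP h1 h2 1 2 zero_le_one zero_le_two (root_sub this) ?_⟩
    rw [vS_negS]
    module
  · left
    have : a.2 ≠ c.2 := hbc
    refine ⟨this, comb_mem hP h1 h2 2 1 zero_le_two zero_le_one (root_sub this) ?_⟩
    rw [vS_negS]
    module
  · exfalso
    rw [vS_negS] at h2
    exact hP.2.1 _ h1 h2

lemma isotropic_iff {J : Finset (SIdx n)} : Isotropic J ↔ ∀ a ∈ J, negS a ∉ J := by
  constructor
  · rintro h ⟨s, i⟩ ha hb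
    cases s
    · exact h i ⟨by simpa [negS] using hb, ha⟩
    · exact h i ⟨ha, by simpa [negS] using hb⟩
  · intro h i hi
    exact h _ hi.1 (by simpa [negS] using hi.2)

lemma dotR_chi_vS {J : Finset (SIdx n)} (hJ : Isotropic J) (a : SIdx n) :
    dotR (chiF J) (vS a) = if a ∈ J then 1 else if negS a ∈ J then -1 else 0 := by
  unfold dotR
  simp only [vS_apply, mul_ite, mul_zero, Finset.sum_ite_eq', Finset.mem_univ,
    if_true]
  have := hJ a.2
  rcases a with ⟨s, i⟩
  cases s <;> simp only [chiF, negS, rsgn, Bool.not_true, Bool.not_false] at * <;>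
    by_cases h1 : (true, i) ∈ J <;> by_cases h2 : (false, i) ∈ J <;> simp_all

lemma dotR_sub (x y z : Fin n → ℝ) : dotR x (y - z) = dotR x y - dotR x z := by
  simp [dotR, mul_sub, Finset.sum_sub_distrib]

lemma isIdeal_iff (hP : IsSignedPoset n P) {J : Finset (SIdx n)} :
    IsIdeal P J ↔ Isotropic J ∧ ∀ a b, sLT P a b → b ∈ J → a ∈ J := by
  unfold IsIdeal
  refine and_congr_right fun hJ => ?_
  have hJ' := isotropic_iff.1 hJ
  constructor
  · intro h a b hab hb
    rw [sLT_iff hP] at hab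
    rcases hab with ⟨hab, h1⟩ | ⟨rfl, h1⟩
    · have := h _ h1
      rw [dotR_sub, dotR_chi_vS hJ, dotR_chi_vS hJ, if_pos hb] at this
      by_contra hc
      rw [if_neg hc] at this
      split_ifs at this <;> norm_num at this
    · have := h _ h1
      rw [dotR_chi_vS hJ] at this
      by_contra hc
      rw [if_neg hc, if_pos hb] at this
      norm_num at this
  · intro h α hα
    rcases root_cases (hP.1 hα) with ⟨a, b, hab, rfl⟩ | ⟨a, rfl⟩
    · have hlt : sLT P a b := (sLT_iff hP a b).2 (Or.inl ⟨hab, hα⟩)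
      have h1 := h a b hlt
      have h2 := h _ _ (sLT_neg hP hlt)
      have h3 := hJ' a
      have h4 := hJ' b
      rw [dotR_sub, dotR_chi_vS hJ, dotR_chi_vS hJ]
      split_ifs <;> simp_all
    · have hlt : sLT P a (negS a) := (sLT_iff hP _ _).2 (Or.inr ⟨rfl, hα⟩)
      have h1 := h _ _ hlt
      rw [dotR_chi_vS hJ]
      split_ifs <;> simp_all

end Order

/-! ### Part 2: connectivity and nested families -/

section Conn
variable {n : ℕ} {P : Set (Fin n → ℝ)}

lemma fComp_symm {a b : SIdx n} (h : fComp P a b) : fComp P b a := Or.symm h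

lemma connStep_symm {J : Finset (SIdx n)} {a b : SIdx n} (h : connStep P J a b) :
    connStep P J b a := ⟨h.2.1, h.1, fComp_symm h.2.2⟩

lemma rtg_symm {J : Finset (SIdx n)} {a b : SIdx n}
    (h : Relation.ReflTransGen (connStep P J) a b) :
    Relation.ReflTransGen (connStep P J) b a := by
  induction h with
  | refl => exact Relation.ReflTransGen.refl
  | tail _ h ih => exact Relation.ReflTransGen.head (connStep_symm h) ih

/-- A connected set meeting a set `S` closed under comparability inside it is contained in `S`. -/
lemma conn_subset {K S : Finset (SIdx n)} (hK : IsConnectedIdl P K)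
    (hS : ∀ a ∈ K, ∀ b ∈ K, a ∈ S → fComp P a b → b ∈ S) {a : SIdx n} (ha : a ∈ K)
    (haS : a ∈ S) : K ⊆ S := by
  intro b hb
  have h := hK.2 a ha b hb
  clear hb
  induction h with
  | refl => exact haS
  | tail _ h ih => exact hS _ h.1 _ h.2.1 ih h.2.2

lemma comp_subset {U : Finset (SIdx n)} {a : SIdx n} : componentIn P U a ⊆ U :=
  Finset.filter_subset _ _

lemma mem_comp_self {U : Finset (SIdx n)} {a : SIdx n} (ha : a ∈ U) : a ∈ componentIn P U a := by
  simp only [componentIn, Finset.mem_filter]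
  exact ⟨ha, Relation.ReflTransGen.refl⟩

lemma comp_closed {U : Finset (SIdx n)} {a b c : SIdx n} (hb : b ∈ componentIn P U a)
    (hc : c ∈ U) (hbc : fComp P b c) : c ∈ componentIn P U a := by
  simp only [componentIn, Finset.mem_filter] at *
  exact ⟨hc, hb.2.tail ⟨hb.1, hc, hbc⟩⟩

lemma comp_conn {U : Finset (SIdx n)} {a : SIdx n} (ha : a ∈ U) :
    IsConnectedIdl P (componentIn P U a) := by
  have key : ∀ b ∈ componentIn P U a,
      Relation.ReflTransGen (connStep P (componentIn P U a)) a b := by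
    intro b hb
    have h := (Finset.mem_filter.1 hb).2
    clear hb
    have : b ∈ componentIn P U a ∧
        Relation.ReflTransGen (connStep P (componentIn P U a)) a b := by
      induction h with
      | refl => exact ⟨mem_comp_self ha, Relation.ReflTransGen.refl⟩
      | tail _ h ih =>
        have := comp_closed ih.1 h.2.1 h.2.2
        exact ⟨this, ih.2.tail ⟨ih.1, this, h.2.2⟩⟩
    exact this.2
  exact ⟨⟨a, mem_comp_self ha⟩, fun b hb c hc => (rtg_symm (key b hb)).trans (key c hc)⟩

/-- A connected subset of `U` meeting the component is inside the component. -/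
lemma conn_subset_comp {U K : Finset (SIdx n)} {a b : SIdx n} (hK : IsConnectedIdl P K)
    (hKU : K ⊆ U) (hb : b ∈ K) (hbC : b ∈ componentIn P U a) : K ⊆ componentIn P U a :=
  conn_subset hK (fun _ _ _ hd hc h => comp_closed hc (hKU hd) h) hb hbC

lemma isotropic_mono {U V : Finset (SIdx n)} (hU : Isotropic U) (h : V ⊆ U) : Isotropic V :=
  fun i hi => hU i ⟨h hi.1, h hi.2⟩

lemma ideal_down (hP : IsSignedPoset n P) {U : Finset (SIdx n)} (hU : IsIdeal P U) {a b : SIdx n}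
    (hab : sLT P a b) (hb : b ∈ U) : a ∈ U := ((isIdeal_iff hP).1 hU).2 a b hab hb

lemma comp_ideal (hP : IsSignedPoset n P) {U : Finset (SIdx n)} (hU : IsIdeal P U) {a : SIdx n} :
    IsIdeal P (componentIn P U a) := by
  rw [isIdeal_iff hP]
  refine ⟨isotropic_mono hU.1 comp_subset, fun b c hbc hc => ?_⟩
  exact comp_closed hc (ideal_down hP hU hbc (comp_subset hc)) (Or.inr hbc)

lemma comp_connIdeal (hP : IsSignedPoset n P) {U : Finset (SIdx n)} (hU : IsIdeal P U)
    {a : SIdx n} (ha : a ∈ U) : IsConnIdeal P (componentIn P U a) :=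
  ⟨comp_ideal hP hU, comp_conn ha⟩

/-- No comparabilities between disjoint ideals. -/
lemma no_edge (hP : IsSignedPoset n P) {J K : Finset (SIdx n)} (hJ : IsIdeal P J)
    (hK : IsIdeal P K) (hd : Disjoint J K) {a b : SIdx n} (ha : a ∈ J) (hb : b ∈ K) :
    ¬ fComp P a b := by
  rintro (h | h)
  · exact Finset.disjoint_left.1 hd ha (ideal_down hP hK h hb)
  · exact Finset.disjoint_left.1 hd (ideal_down hP hJ h ha) hb

lemma triv_symm {J K : Finset (SIdx n)} (h : TrivInter J K) : TrivInter K J := by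
  unfold TrivInter NontrivInter at *
  rw [Finset.inter_comm]
  tauto

lemma triv_of_subset {J K : Finset (SIdx n)} (h : J ⊆ K) : TrivInter J K := fun h' => h'.2.1 h

lemma disjoint_of_supp {J K : Finset (SIdx n)} (h : ¬ (suppF J ∩ suppF K).Nonempty) :
    Disjoint J K := by
  rw [Finset.disjoint_left]
  intro a ha hb
  exact h ⟨a.2, Finset.mem_inter.2 ⟨Finset.mem_image_of_mem _ ha, Finset.mem_image_of_mem _ hb⟩⟩

lemma triv_cases {J K : Finset (SIdx n)} (h : TrivInter J K) : J ⊆ K ∨ K ⊆ J ∨ Disjoint J K := by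
  unfold TrivInter NontrivInter at h
  have := @disjoint_of_supp n J K
  tauto

lemma triv_of_disjoint {U J K : Finset (SIdx n)} (hU : Isotropic U) (hJ : J ⊆ U) (hK : K ⊆ U)
    (h : Disjoint J K) : TrivInter J K := by
  rintro ⟨⟨i, hi⟩, -⟩
  simp only [suppF, Finset.mem_inter, Finset.mem_image] at hi
  obtain ⟨⟨a, ha, rfl⟩, b, hb, hab⟩ := hi
  rcases snd_eq_cases hab with rfl | rfl
  · exact Finset.disjoint_left.1 h ha hb
  · exact isotropic_iff.1 hU _ (hK hb) (hJ ha)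

/-- connected subset of U is trivial with each component of U -/
lemma comp_triv {U W K : Finset (SIdx n)} {a : SIdx n} (hU : Isotropic U) (hW : W ⊆ U)
    (hK : IsConnectedIdl P K) (hKW : K ⊆ W) :
    TrivInter (componentIn P W a) K := by
  by_cases h : Disjoint (componentIn P W a) K
  · exact triv_of_disjoint hU (comp_subset.trans hW) (hKW.trans hW) h
  · obtain ⟨b, hb, hb'⟩ := Finset.not_disjoint_iff.1 h
    exact triv_symm (triv_of_subset (conn_subset_comp hK hKW hb' hb))

/-- `T` is a maximal pairwise trivially intersecting family of connected ideals inside `U`. -/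
def MaxNest (P : Set (Fin n → ℝ)) (U : Finset (SIdx n)) (T : Finset (Finset (SIdx n))) : Prop :=
  (∀ J ∈ T, IsConnIdeal P J ∧ J ⊆ U) ∧ (∀ J ∈ T, ∀ K ∈ T, TrivInter J K) ∧
    ∀ J, IsConnIdeal P J → J ⊆ U → (∀ K ∈ T, TrivInter J K) → J ∈ T

/-- Union of a family. -/
def unionT (T : Finset (Finset (SIdx n))) : Finset (SIdx n) := T.biUnion id

lemma mem_unionT {T : Finset (Finset (SIdx n))} {a : SIdx n} :
    a ∈ unionT T ↔ ∃ J ∈ T, a ∈ J := by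
  simp [unionT]

lemma exists_minimal (hP : IsSignedPoset n P) {S : Finset (SIdx n)} (hS : S.Nonempty) :
    ∃ a ∈ S, ∀ b ∈ S, ¬ sLT P b a := by
  have : IsTrans (SIdx n) (sLT P) := ⟨fun _ _ _ => sLT_trans hP⟩
  have : Std.Irrefl (sLT P) := ⟨sLT_irrefl hP⟩
  have wf : WellFounded (sLT P) := Finite.wellFounded_of_trans_of_irrefl _
  obtain ⟨a, ha, h⟩ := wf.has_min (S : Set (SIdx n)) (by simpa using hS)
  exact ⟨a, by simpa using ha, fun b hb => h b (by simpa using hb)⟩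

/-- A union of ideals that is isotropic is an ideal. -/
lemma unionT_ideal (hP : IsSignedPoset n P) {T : Finset (Finset (SIdx n))}
    (hT : ∀ J ∈ T, IsIdeal P J) (hi : Isotropic (unionT T)) : IsIdeal P (unionT T) := by
  rw [isIdeal_iff hP]
  refine ⟨hi, fun a b hab hb => ?_⟩
  rw [mem_unionT] at *
  obtain ⟨J, hJ, hb⟩ := hb
  exact ⟨J, hJ, ideal_down hP (hT J hJ) hab hb⟩

/-- Add a minimal element of `U \ V` to an ideal `V`. -/
lemma insert_ideal (hP : IsSignedPoset n P) {U V : Finset (SIdx n)} (hU : IsIdeal P U)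
    (hV : IsIdeal P V) (hVU : V ⊆ U) {a : SIdx n} (ha : a ∈ U)
    (hmin : ∀ b ∈ U \ V, ¬ sLT P b a) : IsIdeal P (insert a V) := by
  rw [isIdeal_iff hP]
  refine ⟨isotropic_mono hU.1 (Finset.insert_subset ha hVU), fun b c hbc hc => ?_⟩
  rw [Finset.mem_insert] at *
  right
  rcases hc with rfl | hc
  · by_contra h
    exact hmin b (Finset.mem_sdiff.2 ⟨ideal_down hP hU hbc ha, h⟩) hbc
  · exact ideal_down hP hV hbc hc

lemma nest_union (hP : IsSignedPoset n P) {U : Finset (SIdx n)} (hU : IsIdeal P U)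
    {T : Finset (Finset (SIdx n))} (hT : MaxNest P U T) : unionT T = U := by
  have hsub : unionT T ⊆ U := by
    intro a ha
    obtain ⟨J, hJ, ha⟩ := mem_unionT.1 ha
    exact (hT.1 J hJ).2 ha
  refine hsub.antisymm ?_
  by_contra hne
  have hV : IsIdeal P (unionT T) :=
    unionT_ideal hP (fun J hJ => (hT.1 J hJ).1.1) (isotropic_mono hU.1 hsub)
  obtain ⟨a, ha, hmin⟩ := exists_minimal hP (Finset.sdiff_nonempty.2 hne)
  rw [Finset.mem_sdiff] at ha
  have hW := insert_ideal hP hU hV hsub ha.1 hmin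
  have hWU : insert a (unionT T) ⊆ U := Finset.insert_subset ha.1 hsub
  have haW : a ∈ insert a (unionT T) := Finset.mem_insert_self _ _
  have := hT.2.2 (componentIn P (insert a (unionT T)) a) (comp_connIdeal hP hW haW)
    (comp_subset.trans hWU) (fun K hK => comp_triv hU.1 hWU (hT.1 K hK).1.2
      (fun b hb => Finset.mem_insert_of_mem (mem_unionT.2 ⟨K, hK, hb⟩)))
  exact ha.2 (mem_unionT.2 ⟨_, this, mem_comp_self haW⟩)

/-- Maximal members of a family. -/
def maxT (T : Finset (Finset (SIdx n))) : Finset (Finset (SIdx n)) :=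
  T.filter (fun J => ∀ K ∈ T, J ⊆ K → K = J)

/-- If a connected set `C` contains properly a nonempty `K`, there is an edge leaving `K`. -/
lemma exists_edge {C K : Finset (SIdx n)} (hC : IsConnectedIdl P C) (hK : K.Nonempty)
    (hKC : K ⊆ C) (hne : K ≠ C) : ∃ a ∈ K, ∃ b ∈ C, b ∉ K ∧ fComp P a b := by
  by_contra h
  push Not at h
  obtain ⟨a, ha⟩ := hK
  refine hne (hKC.antisymm (conn_subset hC (fun c _ d hd hc hcd => ?_) (hKC ha) ha))
  by_contra hdK
  exact h c hc d hd hdK hcd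

lemma nest_insert (hP : IsSignedPoset n P) {U : Finset (SIdx n)} (hU : IsIdeal P U) {a : SIdx n}
    (ha : a ∈ U) (hUa : IsIdeal P (U.erase a)) {T : Finset (Finset (SIdx n))}
    (hT : MaxNest P (U.erase a) T) :
    MaxNest P U (insert (componentIn P U a) T) ∧ componentIn P U a ∉ T ∧
      componentIn P U a ∈ maxT (insert (componentIn P U a) T) := by
  have haC : a ∈ componentIn P U a := mem_comp_self ha
  have hCT : componentIn P U a ∉ T := fun h => by
    have := (hT.1 _ h).2 haC
    simp at this
  have hsub : ∀ K ∈ T, K ⊆ U := fun K hK => (hT.1 K hK).2.trans (Finset.erase_subset _ _)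
  have htr : ∀ K ∈ T, TrivInter (componentIn P U a) K := fun K hK =>
    comp_triv hU.1 subset_rfl (hT.1 K hK).1.2 (hsub K hK)
  refine ⟨⟨?_, ?_, ?_⟩, hCT, ?_⟩
  · intro J hJ
    rcases Finset.mem_insert.1 hJ with rfl | hJ
    · exact ⟨comp_connIdeal hP hU ha, comp_subset⟩
    · exact ⟨(hT.1 J hJ).1, hsub J hJ⟩
  · intro J hJ K hK
    rcases Finset.mem_insert.1 hJ with rfl | hJ <;> rcases Finset.mem_insert.1 hK with rfl | hK
    · exact triv_of_subset subset_rfl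
    · exact htr K hK
    · exact triv_symm (htr J hJ)
    · exact hT.2.1 J hJ K hK
  · intro K hK hKU hKT
    by_cases haK : a ∈ K
    · have hKC : K ⊆ componentIn P U a := conn_subset_comp hK.2 hKU haK haC
      by_cases hne : K = componentIn P U a
      · rw [hne]; exact Finset.mem_insert_self _ _
      exfalso
      obtain ⟨k, hk, b, hb, hbK, hkb⟩ := exists_edge (comp_conn ha) hK.2.1 hKC hne
      have hbU : b ∈ U.erase a := Finset.mem_erase.2
        ⟨fun h => hbK (h ▸ haK), comp_subset hb⟩
      rw [← nest_union hP hUa hT, mem_unionT] at hbU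
      obtain ⟨D, hD, hbD⟩ := hbU
      rcases triv_cases (hKT D (Finset.mem_insert_of_mem hD)) with h | h | h
      · have := (hT.1 D hD).2 (h haK)
        simp at this
      · exact hbK (h hbD)
      · exact no_edge hP hK.1 (hT.1 D hD).1.1 h hk hbD hkb
    · refine Finset.mem_insert_of_mem (hT.2.2 K hK (fun b hb => Finset.mem_erase.2
        ⟨fun h => haK (h ▸ hb), hKU hb⟩) fun D hD => hKT D (Finset.mem_insert_of_mem hD))
  · refine Finset.mem_filter.2 ⟨Finset.mem_insert_self _ _, fun K hK hCK => ?_⟩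
    rcases Finset.mem_insert.1 hK with rfl | hK
    · rfl
    · have := (hT.1 K hK).2 (hCK haC)
      simp at this

lemma nest_root (hP : IsSignedPoset n P) {U : Finset (SIdx n)} (hU : IsIdeal P U)
    {T : Finset (Finset (SIdx n))} (hT : MaxNest P U T) {J : Finset (SIdx n)} (hJ : J ∈ maxT T) :
    ∃ a ∈ U, IsIdeal P (U.erase a) ∧ componentIn P U a = J ∧ MaxNest P (U.erase a) (T.erase J) := by
  obtain ⟨hJT, hJmax⟩ := Finset.mem_filter.1 hJ
  have hun := nest_union hP hU hT
  have hJc := (hT.1 J hJT).1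
  have hJU := (hT.1 J hJT).2
  -- `J` is closed under comparability in `U`
  have hJcl : ∀ a ∈ J, ∀ b ∈ U, fComp P a b → b ∈ J := by
    intro a ha b hb hab
    by_contra hbJ
    rw [← hun, mem_unionT] at hb
    obtain ⟨K, hK, hbK⟩ := hb
    rcases triv_cases (hT.2.1 J hJT K hK) with h | h | h
    · exact hbJ (hJmax K hK h ▸ hbK)
    · exact hbJ (h hbK)
    · exact no_edge hP hJc.1 (hT.1 K hK).1.1 h ha hbK hab
  have hJcomp : ∀ K : Finset (SIdx n), IsConnectedIdl P K → K ⊆ U → ∀ a ∈ K, a ∈ J → K ⊆ J :=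
    fun K hK hKU a ha haJ =>
      conn_subset hK (fun c _ d hd hc hcd => hJcl c hc d (hKU hd) hcd) ha haJ
  set V := unionT (T.erase J) with hVdef
  have hVU : V ⊆ U := by
    intro a ha
    obtain ⟨K, hK, ha⟩ := mem_unionT.1 ha
    exact (hT.1 K (Finset.mem_of_mem_erase hK)).2 ha
  have hV : IsIdeal P V :=
    unionT_ideal hP (fun K hK => (hT.1 K (Finset.mem_of_mem_erase hK)).1.1)
      (isotropic_mono hU.1 hVU)
  -- `J` is not contained in `V`
  have hJV : ¬ J ⊆ V := by
    intro hJV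
    have hprop : ∀ K ∈ T.erase J, ∀ a ∈ K, a ∈ J → K ⊆ J := fun K hK a ha haJ =>
      hJcomp K (hT.1 K (Finset.mem_of_mem_erase hK)).1.2 (hT.1 K (Finset.mem_of_mem_erase hK)).2
        a ha haJ
    obtain ⟨j, hj⟩ := hJc.2.1
    obtain ⟨K0, hK0, hjK0⟩ := mem_unionT.1 (hJV hj)
    obtain ⟨K, hK, hKmax⟩ := Finset.exists_max_image ((T.erase J).filter (fun K => K ⊆ J))
      Finset.card ⟨K0, Finset.mem_filter.2 ⟨hK0, hprop K0 hK0 j hjK0 hj⟩⟩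
    obtain ⟨hK, hKJ⟩ := Finset.mem_filter.1 hK
    have hKT := Finset.mem_of_mem_erase hK
    obtain ⟨k, hk, b, hb, hbK, hkb⟩ :=
      exists_edge hJc.2 (hT.1 K hKT).1.2.1 hKJ (Finset.ne_of_mem_erase hK)
    obtain ⟨D, hD, hbD⟩ := mem_unionT.1 (hJV hb)
    have hDT := Finset.mem_of_mem_erase hD
    rcases triv_cases (hT.2.1 K hKT D hDT) with h | h | h
    · have h1 := hKmax D (Finset.mem_filter.2 ⟨hD, hprop D hD b hbD hb⟩)
      have h2 := Finset.eq_of_subset_of_card_le h h1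
      exact hbK (h2 ▸ hbD)
    · exact hbK (h hbD)
    · exact no_edge hP (hT.1 K hKT).1.1 (hT.1 D hDT).1.1 h hk hbD hkb
  have hUV : U ⊆ V ∪ J := by
    intro b hb
    rw [← hun, mem_unionT] at hb
    obtain ⟨K, hK, hbK⟩ := hb
    rw [Finset.mem_union]
    by_cases h : K = J
    · exact Or.inr (h ▸ hbK)
    · exact Or.inl (mem_unionT.2 ⟨K, Finset.mem_erase.2 ⟨h, hK⟩, hbK⟩)
  obtain ⟨a, ha, hmin⟩ := exists_minimal hP (S := U \ V)
    (Finset.sdiff_nonempty.2 fun h => hJV (hJU.trans h))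
  obtain ⟨haU, haV⟩ := Finset.mem_sdiff.1 ha
  have haJ : a ∈ J := by
    have := hUV haU
    rw [Finset.mem_union] at this
    tauto
  have hW := insert_ideal hP hU hV hVU haU hmin
  have hWU : insert a V ⊆ U := Finset.insert_subset haU hVU
  have haW : a ∈ insert a V := Finset.mem_insert_self _ _
  have hCJ : componentIn P (insert a V) a ⊆ J :=
    hJcomp _ (comp_conn haW) (comp_subset.trans hWU) a (mem_comp_self haW) haJ
  have hCT := hT.2.2 (componentIn P (insert a V) a) (comp_connIdeal hP hW haW)
    (comp_subset.trans hWU) (fun K hK => by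
      by_cases h : K = J
      · subst h
        exact triv_of_subset hCJ
      · exact comp_triv hU.1 hWU (hT.1 K hK).1.2
          (fun b hb => Finset.mem_insert_of_mem
            (mem_unionT.2 ⟨K, Finset.mem_erase.2 ⟨h, hK⟩, hb⟩)))
  have hCeq : componentIn P (insert a V) a = J := by
    by_contra h
    exact haV (mem_unionT.2 ⟨_, Finset.mem_erase.2 ⟨h, hCT⟩, mem_comp_self haW⟩)
  have hJW : J ⊆ insert a V := hCeq ▸ comp_subset
  have hWeq : insert a V = U := hWU.antisymm (hUV.trans
    (Finset.union_subset (Finset.subset_insert _ _) hJW))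
  have hVeq : U.erase a = V := by
    rw [← hWeq, Finset.erase_insert haV]
  refine ⟨a, haU, hVeq ▸ hV, hWeq ▸ hCeq, ?_⟩
  rw [hVeq]
  refine ⟨?_, ?_, ?_⟩
  · intro K hK
    exact ⟨(hT.1 K (Finset.mem_of_mem_erase hK)).1, fun b hb => mem_unionT.2 ⟨K, hK, hb⟩⟩
  · intro K hK L hL
    exact hT.2.1 K (Finset.mem_of_mem_erase hK) L (Finset.mem_of_mem_erase hL)
  · intro K hK hKV hKT
    refine Finset.mem_erase.2 ⟨fun h => haV (hKV (h ▸ haJ)), hT.2.2 K hK (hKV.trans hVU) ?_⟩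
    intro L hL
    by_cases h : L = J
    · subst h
      have := comp_triv (a := a) hU.1 hWU hK.2 (hKV.trans (Finset.subset_insert _ _))
      rw [hCeq] at this
      exact triv_symm this
    · exact hKT L (Finset.mem_erase.2 ⟨h, hL⟩)

end Conn

/-! ### Part 3: the recursion for sums over maximal nested families -/

section Sums
variable {n : ℕ} {P : Set (Fin n → ℝ)}

lemma dot_chi (x : Fin n → ℝ) {J : Finset (SIdx n)} (hJ : Isotropic J) :
    dotR x (chiF J) = ∑ a ∈ J, rsgn a.1 * x a.2 := by
  have h0 : ∑ a ∈ J, rsgn a.1 * x a.2 = ∑ a, if a ∈ J then rsgn a.1 * x a.2 else 0 := by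
    rw [Finset.sum_ite_mem, Finset.univ_inter]
  rw [h0, Fintype.sum_prod_type_right]
  unfold dotR
  refine Finset.sum_congr rfl fun i _ => ?_
  have := hJ i
  rw [Fintype.sum_bool]
  simp only [chiF, rsgn]
  by_cases h1 : (true, i) ∈ J <;> by_cases h2 : (false, i) ∈ J <;> simp_all

/-- Sum over maximal nested families. -/
def Gsum (P : Set (Fin n → ℝ)) (x : Fin n → ℝ) (U : Finset (SIdx n)) : ℝ :=
  ∑ T ∈ Finset.univ.filter (MaxNest P U), ∏ J ∈ T, (dotR x (chiF J))⁻¹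

lemma exists_maxT {T : Finset (Finset (SIdx n))} {K : Finset (SIdx n)} (hK : K ∈ T) :
    ∃ J ∈ maxT T, K ⊆ J := by
  obtain ⟨J, hJ, hmax⟩ := Finset.exists_max_image (T.filter (fun J => K ⊆ J)) Finset.card
    ⟨K, Finset.mem_filter.2 ⟨hK, subset_rfl⟩⟩
  obtain ⟨hJT, hKJ⟩ := Finset.mem_filter.1 hJ
  refine ⟨J, Finset.mem_filter.2 ⟨hJT, fun L hL hJL => ?_⟩, hKJ⟩
  exact (Finset.eq_of_subset_of_card_le hJL
    (hmax L (Finset.mem_filter.2 ⟨hL, hKJ.trans hJL⟩))).symm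

lemma dot_union (hP : IsSignedPoset n P) (x : Fin n → ℝ) {U : Finset (SIdx n)}
    (hU : IsIdeal P U) {T : Finset (Finset (SIdx n))} (hT : MaxNest P U T) :
    dotR x (chiF U) = ∑ J ∈ maxT T, dotR x (chiF J) := by
  have h1 : U = (maxT T).biUnion id := by
    conv_lhs => rw [← nest_union hP hU hT]
    ext a
    rw [mem_unionT, Finset.mem_biUnion]
    constructor
    · rintro ⟨K, hK, ha⟩
      obtain ⟨J, hJ, hKJ⟩ := exists_maxT hK
      exact ⟨J, hJ, hKJ ha⟩
    · rintro ⟨J, hJ, ha⟩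
      exact ⟨J, (Finset.mem_filter.1 hJ).1, ha⟩
  rw [dot_chi x hU.1, h1, Finset.sum_biUnion]
  · refine Finset.sum_congr rfl fun J hJ => ?_
    rw [dot_chi x (hT.1 J (Finset.mem_filter.1 hJ).1).1.1.1]
    rfl
  · intro J hJ K hK hne
    obtain ⟨hJT, hJm⟩ := Finset.mem_filter.1 hJ
    obtain ⟨hKT, hKm⟩ := Finset.mem_filter.1 hK
    rcases triv_cases (hT.2.1 J hJT K hKT) with h | h | h
    · exact absurd (hJm K hKT h).symm hne
    · exact absurd (hKm J hJT h) hne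
    · exact h

lemma Gsum_rec (hP : IsSignedPoset n P) (x : Fin n → ℝ)
    (hx : ∀ J : Finset (SIdx n), IsIdeal P J → J.Nonempty → dotR x (chiF J) ≠ 0)
    {U : Finset (SIdx n)} (hU : IsIdeal P U) :
    dotR x (chiF U) * Gsum P x U =
      ∑ a ∈ U.filter (fun a => IsIdeal P (U.erase a)), Gsum P x (U.erase a) := by
  unfold Gsum
  rw [Finset.mul_sum]
  have h1 : ∀ T ∈ Finset.univ.filter (MaxNest P U),
      dotR x (chiF U) * ∏ J ∈ T, (dotR x (chiF J))⁻¹ =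
      ∑ J ∈ maxT T, ∏ K ∈ T.erase J, (dotR x (chiF K))⁻¹ := by
    intro T hT
    have hT := (Finset.mem_filter.1 hT).2
    rw [dot_union hP x hU hT, Finset.sum_mul]
    refine Finset.sum_congr rfl fun J hJ => ?_
    have hJT := (Finset.mem_filter.1 hJ).1
    rw [← Finset.mul_prod_erase T _ hJT, ← mul_assoc, mul_inv_cancel₀, one_mul]
    exact hx J (hT.1 J hJT).1.1 (hT.1 J hJT).1.2.1
  rw [Finset.sum_congr rfl h1, Finset.sum_sigma', Finset.sum_sigma']
  symm
  refine Finset.sum_bij (fun p _ => ⟨insert (componentIn P U p.1) p.2, componentIn P U p.1⟩)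
    ?_ ?_ ?_ ?_
  · rintro ⟨a, T⟩ h
    simp only [Finset.mem_sigma, Finset.mem_filter, Finset.mem_univ, true_and] at h ⊢
    obtain ⟨h1, -, h3⟩ := nest_insert hP hU h.1.1 h.1.2 h.2
    exact ⟨h1, h3⟩
  · rintro ⟨a, T⟩ h ⟨b, S⟩ h' heq
    simp only [Finset.mem_sigma, Finset.mem_filter, Finset.mem_univ, true_and] at h h'
    obtain ⟨-, h2, -⟩ := nest_insert hP hU h.1.1 h.1.2 h.2
    obtain ⟨-, h2', -⟩ := nest_insert hP hU h'.1.1 h'.1.2 h'.2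
    simp only [Sigma.mk.injEq, heq_eq_eq] at heq
    obtain ⟨he1, he2⟩ := heq
    have hTS : T = S := by
      rw [← Finset.erase_insert h2, ← Finset.erase_insert h2', he1, he2]
    subst hTS
    have hab : U.erase a = U.erase b := by
      rw [← nest_union hP h.1.2 h.2, ← nest_union hP h'.1.2 h'.2]
    have : a = b := by
      by_contra hne
      have : a ∈ U.erase b := Finset.mem_erase.2 ⟨hne, h.1.1⟩
      rw [← hab] at this
      simp at this
    rw [this]
  · rintro ⟨T, J⟩ h
    simp only [Finset.mem_sigma, Finset.mem_filter, Finset.mem_univ, true_and] at h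
    obtain ⟨a, ha, h1, h2, h3⟩ := nest_root hP hU h.1 h.2
    refine ⟨⟨a, T.erase J⟩, ?_, ?_⟩
    · simp only [Finset.mem_sigma, Finset.mem_filter, Finset.mem_univ, true_and]
      exact ⟨⟨ha, h1⟩, h3⟩
    · simp only [h2]
      rw [Finset.insert_erase (Finset.mem_filter.1 h.2).1]
  · rintro ⟨a, T⟩ h
    simp only [Finset.mem_sigma, Finset.mem_filter, Finset.mem_univ, true_and] at h
    obtain ⟨-, h2, -⟩ := nest_insert hP hU h.1.1 h.1.2 h.2
    simp only
    rw [Finset.erase_insert h2]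

lemma Gsum_empty (x : Fin n → ℝ) : Gsum P x ∅ = 1 := by
  have : Finset.univ.filter (MaxNest P (∅ : Finset (SIdx n))) = {∅} := by
    ext T
    simp only [Finset.mem_filter, Finset.mem_univ, true_and, Finset.mem_singleton]
    constructor
    · intro h
      rw [Finset.eq_empty_iff_forall_notMem]
      intro J hJ
      obtain ⟨h1, h2⟩ := h.1 J hJ
      obtain ⟨a, ha⟩ := h1.2.1
      simpa using h2 ha
    · rintro rfl
      refine ⟨by simp, by simp, fun J hJ hJ0 _ => ?_⟩
      obtain ⟨a, ha⟩ := hJ.2.1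
      simpa using hJ0 ha
  rw [Gsum, this]
  simp

/-! ### Part 4: sequences with ideal prefixes -/

/-- Prefix of a sequence. -/
def preF {k : ℕ} (f : Fin k → SIdx n) (m : Fin k) : Finset (SIdx n) :=
  (Finset.univ.filter (fun j : Fin k => j ≤ m)).image f

/-- Injective sequences all of whose prefixes are ideals. -/
def GoodSeq (P : Set (Fin n → ℝ)) {k : ℕ} (f : Fin k → SIdx n) : Prop :=
  Function.Injective f ∧ ∀ m, IsIdeal P (preF f m)

/-- Sum over good sequences with image `U`. -/
def Asum (P : Set (Fin n → ℝ)) (x : Fin n → ℝ) (k : ℕ) (U : Finset (SIdx n)) : ℝ :=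
  ∑ f ∈ Finset.univ.filter (fun f : Fin k → SIdx n => GoodSeq P f ∧ Finset.univ.image f = U),
    ∏ m, (dotR x (chiF (preF f m)))⁻¹

lemma preF_castSucc {k : ℕ} (f : Fin (k + 1) → SIdx n) (m : Fin k) :
    preF f m.castSucc = preF (fun i => f i.castSucc) m := by
  ext a
  simp only [preF, Finset.mem_image, Finset.mem_filter, Finset.mem_univ, true_and]
  constructor
  · rintro ⟨j, hj, rfl⟩
    refine ⟨j.castLT (lt_of_le_of_lt hj m.2), hj, rfl⟩
  · rintro ⟨j, hj, rfl⟩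
    exact ⟨j.castSucc, hj, rfl⟩

lemma preF_last {k : ℕ} (f : Fin (k + 1) → SIdx n) :
    preF f (Fin.last k) = Finset.univ.image f := by
  simp [preF, Fin.le_last]

lemma good_snoc {k : ℕ} {U : Finset (SIdx n)} (hU : IsIdeal P U) (f : Fin (k + 1) → SIdx n) :
    (GoodSeq P f ∧ Finset.univ.image f = U) ↔
      f (Fin.last k) ∈ U ∧ GoodSeq P (fun i : Fin k => f i.castSucc) ∧
        Finset.univ.image (fun i : Fin k => f i.castSucc) = U.erase (f (Fin.last k)) := by
  have himg : Finset.univ.image f =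
      insert (f (Fin.last k)) (Finset.univ.image (fun i : Fin k => f i.castSucc)) := by
    ext a
    simp [Fin.exists_fin_succ', eq_comm, or_comm]
  constructor
  · rintro ⟨⟨hinj, hid⟩, rfl⟩
    refine ⟨Finset.mem_image_of_mem _ (Finset.mem_univ _), ⟨fun i j h => ?_, fun m => ?_⟩, ?_⟩
    · exact Fin.castSucc_injective _ (hinj h)
    · rw [← preF_castSucc]
      exact hid _
    · rw [himg, Finset.erase_insert]
      simp only [Finset.mem_image, Finset.mem_univ, true_and, not_exists]
      intro i h
      exact (Fin.castSucc_lt_last i).ne (hinj h)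
  · rintro ⟨hl, ⟨hinj, hid⟩, him⟩
    have hU' : Finset.univ.image f = U := by
      rw [himg, him, Finset.insert_erase hl]
    have hne : ∀ i : Fin k, f i.castSucc ≠ f (Fin.last k) := by
      intro i h
      have : f i.castSucc ∈ U.erase (f (Fin.last k)) := by
        rw [← him]
        exact Finset.mem_image_of_mem (fun i : Fin k => f i.castSucc) (Finset.mem_univ i)
      rw [h] at this
      simp at this
    refine ⟨⟨fun i j h => ?_, fun m => ?_⟩, hU'⟩
    · induction i using Fin.lastCases with
      | last =>
        induction j using Fin.lastCases with
        | last => rfl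
        | cast j => exact absurd h.symm (hne j)
      | cast i =>
        induction j using Fin.lastCases with
        | last => exact absurd h (hne i)
        | cast j => rw [hinj h]
    · induction m using Fin.lastCases with
      | last => rw [preF_last, hU']; exact hU
      | cast m => rw [preF_castSucc]; exact hid m

lemma Asum_succ (hP : IsSignedPoset n P) (x : Fin n → ℝ) (k : ℕ) {U : Finset (SIdx n)}
    (hU : IsIdeal P U) (hcard : U.card = k + 1) :
    Asum P x (k + 1) U = (dotR x (chiF U))⁻¹ *
      ∑ a ∈ U.filter (fun a => IsIdeal P (U.erase a)), Asum P x k (U.erase a) := by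
  unfold Asum
  rw [Finset.sum_sigma', Finset.mul_sum]
  refine Finset.sum_bij' (fun f _ => ⟨f (Fin.last k), fun i => f i.castSucc⟩)
    (fun p _ => Fin.snoc (α := fun _ => SIdx n) p.2 p.1) ?_ ?_ ?_ ?_ ?_
  · intro f hf
    simp only [Finset.mem_sigma, Finset.mem_filter, Finset.mem_univ, true_and] at hf ⊢
    obtain ⟨h1, h2, h3⟩ := (good_snoc hU f).1 hf
    refine ⟨⟨h1, ?_⟩, h2, h3⟩
    rw [← h3]
    cases k with
    | zero => exact (isIdeal_iff hP).2 ⟨by simp [Isotropic], by simp⟩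
    | succ k => rw [← preF_last]; exact h2.2 _
  · rintro ⟨a, g⟩ h
    simp only [Finset.mem_sigma, Finset.mem_filter, Finset.mem_univ, true_and] at h ⊢
    rw [good_snoc hU]
    simp only [Fin.snoc_last, Fin.snoc_castSucc]
    exact ⟨h.1.1, h.2⟩
  · intro f hf
    exact Fin.snoc_init_self (α := fun _ => SIdx n) f
  · rintro ⟨a, g⟩ h
    simp only [Fin.snoc_last, Fin.snoc_castSucc]
  · intro f hf
    simp only [Finset.mem_filter, Finset.mem_univ, true_and] at hf
    rw [Fin.prod_univ_castSucc, mul_comm, preF_last, hf.2]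
    simp only [preF_castSucc]

lemma Asum_eq (hP : IsSignedPoset n P) (x : Fin n → ℝ)
    (hx : ∀ J : Finset (SIdx n), IsIdeal P J → J.Nonempty → dotR x (chiF J) ≠ 0)
    (k : ℕ) : ∀ U : Finset (SIdx n), IsIdeal P U → U.card = k → Asum P x k U = Gsum P x U := by
  induction k with
  | zero =>
    intro U hU hc
    rw [Finset.card_eq_zero] at hc
    subst hc
    rw [Gsum_empty, Asum]
    have : (Finset.univ.filter (fun f : Fin 0 → SIdx n =>
        GoodSeq P f ∧ Finset.univ.image f = ∅)) = Finset.univ := by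
      ext f
      simp only [Finset.mem_filter, Finset.mem_univ, true_and, iff_true]
      exact ⟨⟨fun i => i.elim0, fun i => i.elim0⟩, by simp⟩
    rw [this]
    simp
  | succ k ih =>
    intro U hU hc
    have hne : U.Nonempty := by
      rw [← Finset.card_pos]; omega
    rw [Asum_succ hP x k hU hc]
    rw [Finset.sum_congr rfl (fun a ha => ih (U.erase a) (Finset.mem_filter.1 ha).2 (by
      rw [Finset.card_erase_of_mem (Finset.mem_filter.1 ha).1]; omega))]
    rw [← Gsum_rec hP x hx hU, ← mul_assoc, inv_mul_cancel₀ (hx U hU hne), one_mul]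

end Sums

/-! ### Part 5: maximal independent sets of a matching -/

section Matching
variable {α : Type} [Fintype α]

/-- Maximal independent subsets of `V`. -/
def MaxInd (r : α → α → Prop) (V T : Finset α) : Prop :=
  T ⊆ V ∧ (∀ J ∈ T, ∀ K ∈ T, ¬ r J K) ∧ ∀ J ∈ V, (∀ K ∈ T, ¬ r J K) → J ∈ T

/-- Unordered related pairs in `V`. -/
def relPairs (r : α → α → Prop) (V : Finset α) : Finset (Sym2 α) :=
  Finset.univ.filter (fun p => ∃ J K, p = s(J, K) ∧ J ∈ V ∧ K ∈ V ∧ r J K)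

lemma maxInd_isolated {r : α → α → Prop} (hs : ∀ a b, r a b → r b a) (y : α → ℝ)
    (hirr : ∀ a, ¬ r a a) {V : Finset α} {J : α} (hJ : J ∈ V) (hiso : ∀ K ∈ V, ¬ r J K) :
    ∑ T ∈ Finset.univ.filter (MaxInd r V), ∏ K ∈ T, (y K)⁻¹ =
      (y J)⁻¹ * ∑ T ∈ Finset.univ.filter (MaxInd r (V.erase J)), ∏ K ∈ T, (y K)⁻¹ := by
  rw [Finset.mul_sum]
  have hmem : ∀ T, MaxInd r V T → J ∈ T := fun T hT =>
    hT.2.2 J hJ fun K hK => hiso K (hT.1 hK)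
  refine Finset.sum_bij' (fun T _ => T.erase J) (fun T _ => insert J T) ?_ ?_ ?_ ?_ ?_
  · intro T hT
    simp only [Finset.mem_filter, Finset.mem_univ, true_and] at hT ⊢
    refine ⟨Finset.erase_subset_erase _ hT.1, fun A hA B hB =>
      hT.2.1 A (Finset.mem_of_mem_erase hA) B (Finset.mem_of_mem_erase hB), fun A hA h => ?_⟩
    rw [Finset.mem_erase] at hA ⊢
    refine ⟨hA.1, hT.2.2 A hA.2 fun K hK => ?_⟩
    by_cases hKJ : K = J
    · subst hKJ
      exact fun h' => hiso A hA.2 (hs _ _ h')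
    · exact h K (Finset.mem_erase.2 ⟨hKJ, hK⟩)
  · intro T hT
    simp only [Finset.mem_filter, Finset.mem_univ, true_and] at hT ⊢
    have hTV : T ⊆ V := hT.1.trans (Finset.erase_subset _ _)
    refine ⟨Finset.insert_subset hJ hTV, fun A hA B hB => ?_, fun A hA h => ?_⟩
    · rcases Finset.mem_insert.1 hA with rfl | hA2 <;> rcases Finset.mem_insert.1 hB with rfl | hB2
      · exact hirr _
      · exact hiso _ (hTV hB2)
      · exact fun h => hiso _ (hTV hA2) (hs _ _ h)
      · exact hT.2.1 A hA2 B hB2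
    · by_cases hAJ : A = J
      · rw [hAJ]; exact Finset.mem_insert_self _ _
      · exact Finset.mem_insert_of_mem (hT.2.2 A (Finset.mem_erase.2 ⟨hAJ, hA⟩)
          fun K hK => h K (Finset.mem_insert_of_mem hK))
  · intro T hT
    simp only [Finset.mem_filter, Finset.mem_univ, true_and] at hT
    exact Finset.insert_erase (hmem T hT)
  · intro T hT
    simp only [Finset.mem_filter, Finset.mem_univ, true_and] at hT
    refine Finset.erase_insert fun h => ?_
    have := hT.1 h
    simp at this
  · intro T hT
    simp only [Finset.mem_filter, Finset.mem_univ, true_and] at hT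
    rw [Finset.mul_prod_erase T (fun K => (y K)⁻¹) (hmem T hT)]

lemma maxInd_matched {r : α → α → Prop} (hs : ∀ a b, r a b → r b a) (y : α → ℝ)
    (hirr : ∀ a, ¬ r a a) {V : Finset α}
    (hm : ∀ A ∈ V, ∀ B ∈ V, ∀ C ∈ V, r A B → r A C → B = C)
    {J K : α} (hJ : J ∈ V) (hK : K ∈ V) (hJK : r J K) :
    ∑ T ∈ (Finset.univ.filter (MaxInd r V)).filter (fun T => J ∈ T), ∏ A ∈ T, (y A)⁻¹ =
      (y J)⁻¹ * ∑ T ∈ Finset.univ.filter (MaxInd r ((V.erase J).erase K)),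
        ∏ A ∈ T, (y A)⁻¹ := by
  rw [Finset.mul_sum]
  have hne : J ≠ K := fun h => hirr K (h ▸ hJK)
  refine Finset.sum_bij' (fun T _ => T.erase J) (fun T _ => insert J T) ?_ ?_ ?_ ?_ ?_
  · intro T hT
    simp only [Finset.mem_filter, Finset.mem_univ, true_and] at hT ⊢
    obtain ⟨hT, hJT⟩ := hT
    have hKT : K ∉ T := fun h => hT.2.1 J hJT K h hJK
    refine ⟨fun A hA => ?_, fun A hA B hB =>
      hT.2.1 A (Finset.mem_of_mem_erase hA) B (Finset.mem_of_mem_erase hB), fun A hA h => ?_⟩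
    · rw [Finset.mem_erase] at hA
      exact Finset.mem_erase.2 ⟨fun h => hKT (h ▸ hA.2), Finset.mem_erase.2 ⟨hA.1, hT.1 hA.2⟩⟩
    · simp only [Finset.mem_erase] at hA ⊢
      refine ⟨hA.2.1, hT.2.2 A hA.2.2 fun B hB => ?_⟩
      by_cases hBJ : B = J
      · subst hBJ
        exact fun h' => hA.1 (hm B hJ A hA.2.2 K hK (hs _ _ h') hJK)
      · exact h B (Finset.mem_erase.2 ⟨hBJ, hB⟩)
  · intro T hT
    simp only [Finset.mem_filter, Finset.mem_univ, true_and] at hT ⊢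
    have hTV : T ⊆ V := hT.1.trans ((Finset.erase_subset _ _).trans (Finset.erase_subset _ _))
    have hKT : K ∉ T := fun h => by
      have := hT.1 h
      simp at this
    have hJT : ∀ A ∈ T, ¬ r J A := fun A hA h =>
      hKT ((hm J hJ A (hTV hA) K hK h hJK) ▸ hA)
    refine ⟨⟨Finset.insert_subset hJ hTV, fun A hA B hB => ?_, fun A hA h => ?_⟩,
      Finset.mem_insert_self _ _⟩
    · rcases Finset.mem_insert.1 hA with rfl | hA2 <;> rcases Finset.mem_insert.1 hB with rfl | hB2
      · exact hirr _
      · exact hJT _ hB2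
      · exact fun h => hJT _ hA2 (hs _ _ h)
      · exact hT.2.1 A hA2 B hB2
    · by_cases hAJ : A = J
      · rw [hAJ]; exact Finset.mem_insert_self _ _
      · have hAK : A ≠ K := by
          rintro rfl
          exact h J (Finset.mem_insert_self _ _) (hs _ _ hJK)
        exact Finset.mem_insert_of_mem (hT.2.2 A
          (Finset.mem_erase.2 ⟨hAK, Finset.mem_erase.2 ⟨hAJ, hA⟩⟩)
          fun B hB => h B (Finset.mem_insert_of_mem hB))
  · intro T hT
    simp only [Finset.mem_filter, Finset.mem_univ, true_and] at hT
    exact Finset.insert_erase hT.2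
  · intro T hT
    simp only [Finset.mem_filter, Finset.mem_univ, true_and] at hT
    refine Finset.erase_insert fun h => ?_
    have := hT.1 h
    simp at this
  · intro T hT
    simp only [Finset.mem_filter, Finset.mem_univ, true_and] at hT
    rw [Finset.mul_prod_erase T (fun K => (y K)⁻¹) hT.2]

lemma matching_sum {r : α → α → Prop} (hs : ∀ a b, r a b → r b a) (hirr : ∀ a, ¬ r a a)
    (y : α → ℝ) (fS : Sym2 α → ℝ) (hf : ∀ a b, fS s(a, b) = y a + y b) (k : ℕ) :
    ∀ V : Finset α, V.card ≤ k → (∀ a ∈ V, y a ≠ 0) →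
    (∀ A ∈ V, ∀ B ∈ V, ∀ C ∈ V, r A B → r A C → B = C) →
    ∑ T ∈ Finset.univ.filter (MaxInd r V), ∏ K ∈ T, (y K)⁻¹ =
      (∏ p ∈ relPairs r V, fS p) / ∏ a ∈ V, y a := by
  induction k with
  | zero =>
    intro V hc _ _
    have hV : V = ∅ := by
      rw [← Finset.card_eq_zero]; omega
    subst hV
    have h1 : Finset.univ.filter (MaxInd r (∅ : Finset α)) = {∅} := by
      ext T
      simp only [Finset.mem_filter, Finset.mem_univ, true_and, Finset.mem_singleton]
      constructor
      · intro h
        exact Finset.subset_empty.1 h.1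
      · rintro rfl
        exact ⟨by simp, by simp, by simp⟩
    have h2 : relPairs r (∅ : Finset α) = ∅ := by
      simp [relPairs]
    rw [h1, h2]
    simp
  | succ k ih =>
    intro V hc hy hm
    rcases V.eq_empty_or_nonempty with rfl | ⟨J, hJ⟩
    · exact ih ∅ (by simp) hy hm
    have hcJ : (V.erase J).card ≤ k := by
      rw [Finset.card_erase_of_mem hJ]; omega
    by_cases hex : ∃ K ∈ V, r J K
    · obtain ⟨K, hK, hJK⟩ := hex
      have hne : J ≠ K := fun h => hirr K (h ▸ hJK)
      have hKe : K ∈ V.erase J := Finset.mem_erase.2 ⟨hne.symm, hK⟩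
      set V' := (V.erase J).erase K with hV'
      have hsub : V' ⊆ V := (Finset.erase_subset _ _).trans (Finset.erase_subset _ _)
      have hpairs : relPairs r V = insert s(J, K) (relPairs r V') := by
        ext p
        simp only [relPairs, Finset.mem_filter, Finset.mem_univ, true_and, Finset.mem_insert]
        constructor
        · rintro ⟨A, B, rfl, hA, hB, hAB⟩
          by_cases hAJ : A = J
          · subst hAJ
            left
            rw [hm A hA B hB K hK hAB hJK]
          by_cases hAK : A = K
          · subst hAK
            left
            rw [hm A hA B hB J hJ hAB (hs _ _ hJK)]
            exact Sym2.eq_swap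
          right
          refine ⟨A, B, rfl, ?_, ?_, hAB⟩
          · exact Finset.mem_erase.2 ⟨hAK, Finset.mem_erase.2 ⟨hAJ, hA⟩⟩
          · refine Finset.mem_erase.2 ⟨?_, Finset.mem_erase.2 ⟨?_, hB⟩⟩
            · rintro rfl
              exact hAJ (hm B hB A hA J hJ (hs _ _ hAB) (hs _ _ hJK))
            · rintro rfl
              exact hAK (hm B hB A hA K hK (hs _ _ hAB) hJK)
        · rintro (rfl | ⟨A, B, rfl, hA, hB, hAB⟩)
          · exact ⟨J, K, rfl, hJ, hK, hJK⟩
          · exact ⟨A, B, rfl, hsub hA, hsub hB, hAB⟩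
      have hnot : s(J, K) ∉ relPairs r V' := by
        simp only [relPairs, Finset.mem_filter, Finset.mem_univ, true_and]
        rintro ⟨A, B, h, hA, hB, -⟩
        have hA' : A ≠ J := (Finset.mem_erase.1 (Finset.mem_erase.1 hA).2).1
        have hB' : B ≠ J := (Finset.mem_erase.1 (Finset.mem_erase.1 hB).2).1
        rw [Sym2.eq_iff] at h
        rcases h with ⟨h, -⟩ | ⟨h, -⟩
        · exact hA' h.symm
        · exact hB' h.symm
      have e1 := maxInd_matched hs y hirr hm hJ hK hJK
      have e2 := maxInd_matched hs y hirr hm hK hJ (hs _ _ hJK)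
      rw [Finset.erase_right_comm] at e2
      have e3 : (Finset.univ.filter (MaxInd r V)).filter (fun T => ¬ J ∈ T) =
          (Finset.univ.filter (MaxInd r V)).filter (fun T => K ∈ T) := by
        ext T
        simp only [Finset.mem_filter, Finset.mem_univ, true_and]
        refine and_congr_right fun hT => ⟨fun h => ?_, fun h h' => hT.2.1 J h' K h hJK⟩
        refine hT.2.2 K hK fun A hA hKA => ?_
        exact h (hm K hK A (hT.1 hA) J hJ hKA (hs _ _ hJK) ▸ hA)
      rw [← Finset.sum_filter_add_sum_filter_not _ (fun T => J ∈ T), e3, e1, e2,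
        ih V' ((Finset.card_erase_le).trans hcJ) (fun a ha => hy a (hsub ha))
          (fun A hA B hB C hC => hm A (hsub hA) B (hsub hB) C (hsub hC)),
        hpairs, Finset.prod_insert hnot, hf, ← Finset.mul_prod_erase V y hJ,
        ← Finset.mul_prod_erase _ y hKe]
      have h1 := hy J hJ
      have h2 := hy K hK
      have h3 : ∏ a ∈ V', y a ≠ 0 := Finset.prod_ne_zero_iff.2 fun a ha => hy a (hsub ha)
      rw [← hV']
      field_simp
      ring
    · push Not at hex
      have hpairs : relPairs r V = relPairs r (V.erase J) := by
        ext p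
        simp only [relPairs, Finset.mem_filter, Finset.mem_univ, true_and]
        constructor
        · rintro ⟨A, B, rfl, hA, hB, hAB⟩
          refine ⟨A, B, rfl, Finset.mem_erase.2 ⟨?_, hA⟩, Finset.mem_erase.2 ⟨?_, hB⟩, hAB⟩
          · rintro rfl
            exact hex B hB hAB
          · rintro rfl
            exact hex A hA (hs _ _ hAB)
        · rintro ⟨A, B, rfl, hA, hB, hAB⟩
          exact ⟨A, B, rfl, Finset.mem_of_mem_erase hA, Finset.mem_of_mem_erase hB, hAB⟩
      rw [maxInd_isolated hs y hirr hJ hex,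
        ih (V.erase J) hcJ (fun a ha => hy a (Finset.mem_of_mem_erase ha))
          (fun A hA B hB C hC => hm A (Finset.mem_of_mem_erase hA) B (Finset.mem_of_mem_erase hB)
            C (Finset.mem_of_mem_erase hC)), hpairs, ← Finset.mul_prod_erase V y hJ]
      rw [div_eq_mul_inv, div_eq_mul_inv, mul_inv]
      ring

end Matching

/-! ### Part 6: linear extensions and the final assembly -/

section Final
variable {n : ℕ} {P : Set (Fin n → ℝ)}

lemma JwSet_eq (w : SIdx n ≃ SIdx n) (m : Fin n) : JwSet w m = preF (fun j => w (true, j)) m := rfl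

lemma mem_JwSet {w : SIdx n ≃ SIdx n} {m : Fin n} {j : Fin n} :
    w (true, j) ∈ JwSet w m ↔ j ≤ m := by
  simp [JwSet]

lemma JwSet_isotropic {w : SIdx n ≃ SIdx n} (hw : IsSPerm w) (m : Fin n) :
    Isotropic (JwSet w m) := by
  rw [isotropic_iff]
  intro a ha hb
  simp only [JwSet, Finset.mem_image, Finset.mem_filter, Finset.mem_univ, true_and] at ha hb
  obtain ⟨i, -, rfl⟩ := ha
  obtain ⟨j, -, hj⟩ := hb
  rw [← hw] at hj
  have := w.injective hj
  simp [negS] at this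

lemma dot_JwSet {w : SIdx n ≃ SIdx n} (hw : IsSPerm w) (m : Fin n) (β : Fin n → ℝ) :
    dotR (chiF (JwSet w m)) (spAct w β) = ∑ i, if i ≤ m then β i else 0 := by
  have hlin : dotR (chiF (JwSet w m)) (spAct w β) =
      ∑ i, β i * dotR (chiF (JwSet w m)) (vS (w (true, i))) := by
    simp only [dotR, spAct, Finset.sum_apply, Pi.smul_apply, smul_eq_mul, Finset.mul_sum]
    rw [Finset.sum_comm]
    refine Finset.sum_congr rfl fun i _ => Finset.sum_congr rfl fun j _ => ?_
    ring
  rw [hlin]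
  refine Finset.sum_congr rfl fun i _ => ?_
  rw [dotR_chi_vS (JwSet_isotropic hw m)]
  by_cases h : i ≤ m
  · rw [if_pos (mem_JwSet.2 h), if_pos h, mul_one]
  · rw [if_neg (fun h' => h (mem_JwSet.1 h')), if_neg h, if_neg, mul_zero]
    intro h'
    simp only [JwSet, Finset.mem_image, Finset.mem_filter, Finset.mem_univ, true_and] at h'
    obtain ⟨j, -, hj⟩ := h'
    rw [← hw] at hj
    have := w.injective hj
    simp [negS] at this

lemma spAct_vS {w : SIdx n ≃ SIdx n} (hw : IsSPerm w) (a : SIdx n) :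
    spAct w (vS a) = vS (w a) := by
  have h1 : spAct w (vS a) = rsgn a.1 • vS (w (true, a.2)) := by
    simp [spAct, vS_apply]
  rw [h1]
  rcases a with ⟨s, i⟩
  cases s
  · have : ((false, i) : SIdx n) = negS (true, i) := rfl
    rw [this, hw, vS_negS]
    simp [negS, rsgn]
  · simp [rsgn]

lemma spAct_sub (w : SIdx n ≃ SIdx n) (y z : Fin n → ℝ) :
    spAct w (y - z) = spAct w y - spAct w z := by
  simp [spAct, sub_smul, Finset.sum_sub_distrib]

lemma sum_le_vS (m : Fin n) (a : SIdx n) :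
    (∑ i, if i ≤ m then vS a i else 0) = if a.2 ≤ m then rsgn a.1 else 0 := by
  simp only [vS_apply]
  rw [Finset.sum_eq_single a.2]
  · simp
  · intro b _ hb
    simp [hb]
  · simp

lemma sum_le_sub (m : Fin n) (y z : Fin n → ℝ) :
    (∑ i, if i ≤ m then (y - z) i else 0) =
      (∑ i, if i ≤ m then y i else 0) - ∑ i, if i ≤ m then z i else 0 := by
  rw [← Finset.sum_sub_distrib]
  refine Finset.sum_congr rfl fun i _ => ?_
  split_ifs <;> simp

lemma stdB_eq (i : Fin n) : stdB n i = vS (true, i) := by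
  simp [vS, rsgn]

lemma linExt_iff (hP : IsSignedPoset n P) {w : SIdx n ≃ SIdx n} (hw : IsSPerm w) :
    IsLinExt P w ↔ ∀ m, IsIdeal P (JwSet w m) := by
  constructor
  · rintro ⟨-, h⟩ m
    refine ⟨JwSet_isotropic hw m, fun α hα => ?_⟩
    obtain ⟨β, hβ, rfl⟩ := h α hα
    rw [dot_JwSet hw]
    rcases hβ with ⟨i, j, hij, t, rfl⟩ | ⟨i, rfl⟩
    · have : stdB n i + rsgn t • stdB n j = vS (true, i) - vS (!t, j) := by
        cases t <;> simp [vS, rsgn, sub_eq_add_neg]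
      rw [this, sum_le_sub, sum_le_vS, sum_le_vS]
      by_cases hj : j ≤ m
      · have hi : i ≤ m := hij.le.trans hj
        simp only [hi, hj, if_true]
        cases t <;> simp [rsgn]
      · simp only [hj, if_false]
        split_ifs <;> simp [rsgn]
    · rw [stdB_eq, sum_le_vS]
      split_ifs <;> simp [rsgn]
  · intro h
    refine ⟨hw, fun α hα => ?_⟩
    rcases root_cases (hP.1 hα) with ⟨a, b, hab, rfl⟩ | ⟨a, rfl⟩
    · obtain ⟨⟨s, i⟩, rfl⟩ := w.surjective a
      obtain ⟨⟨t, j⟩, rfl⟩ := w.surjective b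
      have hij : i ≠ j := by
        rintro rfl
        have : ((t, i) : SIdx n) = (s, i) ∨ ((t, i) : SIdx n) = negS (s, i) :=
          snd_eq_cases rfl
        rcases this with h' | h'
        · rw [h'] at hab; exact hab rfl
        · rw [h', hw] at hab; exact hab rfl
      have heq : vS (w (s, i)) - vS (w (t, j)) = spAct w (vS (s, i) - vS (t, j)) := by
        rw [spAct_sub, spAct_vS hw, spAct_vS hw]
      refine ⟨_, ?_, heq⟩
      rw [heq] at hα
      rcases lt_or_gt_of_ne hij with hlt | hlt
      · have := (h i).2 _ hα
        rw [dot_JwSet hw, sum_le_sub, sum_le_vS, sum_le_vS] at this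
        simp only [le_refl, if_true, not_le.2 hlt, if_false] at this
        have hs : s = true := by
          cases s
          · norm_num [rsgn] at this
          · rfl
        subst hs
        left
        refine ⟨i, j, hlt, !t, ?_⟩
        cases t <;> simp [vS, rsgn, sub_eq_add_neg]
      · have := (h j).2 _ hα
        rw [dot_JwSet hw, sum_le_sub, sum_le_vS, sum_le_vS] at this
        simp only [le_refl, if_true, not_le.2 hlt, if_false] at this
        have ht : t = false := by
          cases t
          · rfl
          · norm_num [rsgn] at this
        subst ht
        left
        refine ⟨j, i, hlt, s, ?_⟩
        simp [vS, rsgn, add_comm]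
    · obtain ⟨⟨s, i⟩, rfl⟩ := w.surjective a
      have heq := (spAct_vS hw (s, i)).symm
      refine ⟨_, ?_, heq⟩
      rw [heq] at hα
      have := (h i).2 _ hα
      rw [dot_JwSet hw, sum_le_vS] at this
      simp only [le_refl, if_true] at this
      have hs : s = true := by
        cases s
        · norm_num [rsgn] at this
        · rfl
      subst hs
      right
      exact ⟨i, (stdB_eq i).symm⟩

lemma empty_ideal (hP : IsSignedPoset n P) : IsIdeal P (∅ : Finset (SIdx n)) :=
  (isIdeal_iff hP).2 ⟨by simp [Isotropic], by simp⟩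

lemma good_image_ideal (hP : IsSignedPoset n P) {k : ℕ} {f : Fin k → SIdx n}
    (hf : GoodSeq P f) : IsIdeal P (Finset.univ.image f) := by
  cases k with
  | zero => simpa using empty_ideal hP
  | succ k => rw [← preF_last]; exact hf.2 _

/-- Extend a sequence to an odd self-map of `±[n]`. -/
def extF (f : Fin n → SIdx n) (a : SIdx n) : SIdx n := if a.1 then f a.2 else negS (f a.2)

lemma negS_inj {a b : SIdx n} (h : negS a = negS b) : a = b := by
  rw [← negS_negS a, h, negS_negS]

lemma extF_injective (hP : IsSignedPoset n P) {f : Fin n → SIdx n} (hf : GoodSeq P f) :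
    Function.Injective (extF f) := by
  have hiso := isotropic_iff.1 (good_image_ideal hP hf).1
  have hm : ∀ i, f i ∈ Finset.univ.image f := fun i => Finset.mem_image_of_mem _ (Finset.mem_univ i)
  rintro ⟨s, i⟩ ⟨t, j⟩ h
  cases s <;> cases t <;> simp only [extF, if_true, Bool.false_eq_true, if_false] at h
  · rw [hf.1 (negS_inj h)]
  · exact absurd (h ▸ hm j) (hiso _ (hm i))
  · exact absurd (h ▸ hm i) (hiso _ (hm j))
  · rw [hf.1 h]

lemma linExts_sum (hP : IsSignedPoset n P) (x : Fin n → ℝ) :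
    ∑ w ∈ linExts n P, ∏ m : Fin n, (dotR x (chiF (JwSet w m)))⁻¹ =
      ∑ f ∈ Finset.univ.filter (fun f : Fin n → SIdx n => GoodSeq P f),
        ∏ m, (dotR x (chiF (preF f m)))⁻¹ := by
  refine Finset.sum_bij (fun w _ => fun j => w (true, j)) ?_ ?_ ?_ ?_
  · intro w hw
    simp only [linExts, Finset.mem_filter, Finset.mem_univ, true_and] at hw ⊢
    refine ⟨fun i j h => ?_, (linExt_iff hP hw.1).1 hw⟩
    have := w.injective h
    simpa using this
  · intro w hw w' hw' h
    simp only [linExts, Finset.mem_filter, Finset.mem_univ, true_and] at hw hw'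
    ext1 a
    rcases a with ⟨s, i⟩
    have hi : w (true, i) = w' (true, i) := congrFun h i
    cases s
    · have : ((false, i) : SIdx n) = negS (true, i) := rfl
      rw [this, hw.1, hw'.1, hi]
    · exact hi
  · intro f hf
    simp only [Finset.mem_filter, Finset.mem_univ, true_and] at hf
    let w : SIdx n ≃ SIdx n := Equiv.ofBijective (extF f)
      (Finite.injective_iff_bijective.1 (extF_injective hP hf))
    have hwf : (fun j => w (true, j)) = f := by
      funext j
      simp [w, extF]
    have hw : IsSPerm w := by
      rintro ⟨s, i⟩
      cases s <;> simp [w, extF, negS]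
    refine ⟨w, ?_, hwf⟩
    simp only [linExts, Finset.mem_filter, Finset.mem_univ, true_and]
    rw [linExt_iff hP hw]
    intro m
    rw [JwSet_eq, hwf]
    exact hf.2 m
  · intro w _
    rfl

lemma card_le_of_isotropic {U : Finset (SIdx n)} (hU : Isotropic U) :
    Set.InjOn Prod.snd (U : Set (SIdx n)) := by
  intro a ha b hb hab
  rcases snd_eq_cases hab with h | h
  · exact h.symm
  · subst h
    exact absurd hb (isotropic_iff.1 hU a ha)

lemma full_iff {U : Finset (SIdx n)} (hU : Isotropic U) :
    U.card = n ↔ ∀ a : SIdx n, a ∈ U ∨ negS a ∈ U := by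
  have h1 : (U.image Prod.snd).card = U.card :=
    Finset.card_image_of_injOn (card_le_of_isotropic hU)
  constructor
  · intro h a
    have h2 : U.image Prod.snd = Finset.univ := by
      rw [← Finset.card_eq_iff_eq_univ, h1, h, Fintype.card_fin]
    have h3 : a.2 ∈ U.image Prod.snd := by rw [h2]; exact Finset.mem_univ _
    obtain ⟨b, hb, hab⟩ := Finset.mem_image.1 h3
    rcases snd_eq_cases hab.symm with rfl | rfl
    · exact Or.inl hb
    · exact Or.inr hb
  · intro h
    have h2 : U.image Prod.snd = Finset.univ := by
      rw [Finset.eq_univ_iff_forall]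
      intro i
      rcases h (true, i) with h | h
      · exact Finset.mem_image.2 ⟨_, h, rfl⟩
      · exact Finset.mem_image.2 ⟨_, h, rfl⟩
    rw [← h1, h2, Finset.card_univ, Fintype.card_fin]

lemma mem_JconnF {J : Finset (SIdx n)} : J ∈ JconnF n P ↔ IsConnIdeal P J := by
  simp [JconnF]

lemma nest_to_maxInd (hP : IsSignedPoset n P) {U : Finset (SIdx n)} (hU : IsIdeal P U)
    (hc : U.card = n) {T : Finset (Finset (SIdx n))} (hT : MaxNest P U T) :
    MaxInd NontrivInter (JconnF n P) T := by
  refine ⟨fun J hJ => mem_JconnF.2 (hT.1 J hJ).1, hT.2.1, fun J hJ h => ?_⟩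
  rw [mem_JconnF] at hJ
  refine hT.2.2 J hJ (fun a ha => ?_) h
  rcases (full_iff hU.1).1 hc a with h' | h'
  · exact h'
  · exfalso
    rw [← nest_union hP hU hT, mem_unionT] at h'
    obtain ⟨K, hK, haK⟩ := h'
    have hKi := (hT.1 K hK).1.1.1
    refine h K hK ⟨⟨a.2, Finset.mem_inter.2 ⟨Finset.mem_image_of_mem _ ha,
      Finset.mem_image.2 ⟨_, haK, rfl⟩⟩⟩, fun hs => ?_, fun hs => ?_⟩
    · exact isotropic_iff.1 hKi a (hs ha) haK
    · exact isotropic_iff.1 hJ.1.1 a ha (hs haK)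

lemma maxInd_to_nest (hP : IsSignedPoset n P) {T : Finset (Finset (SIdx n))}
    (hT : MaxInd NontrivInter (JconnF n P) T) :
    IsIdeal P (unionT T) ∧ (unionT T).card = n ∧ MaxNest P (unionT T) T := by
  have hTc : ∀ J ∈ T, IsConnIdeal P J := fun J hJ => mem_JconnF.1 (hT.1 hJ)
  have hiso : Isotropic (unionT T) := by
    rw [isotropic_iff]
    intro a ha hb
    obtain ⟨J, hJ, ha⟩ := mem_unionT.1 ha
    obtain ⟨K, hK, hb⟩ := mem_unionT.1 hb
    refine hT.2.1 J hJ K hK ⟨⟨a.2, Finset.mem_inter.2 ⟨Finset.mem_image_of_mem _ ha,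
      Finset.mem_image.2 ⟨_, hb, rfl⟩⟩⟩, fun hs => ?_, fun hs => ?_⟩
    · exact isotropic_iff.1 (hTc K hK).1.1 a (hs ha) hb
    · exact isotropic_iff.1 (hTc J hJ).1.1 a ha (hs hb)
  have hV : IsIdeal P (unionT T) := unionT_ideal hP (fun J hJ => (hTc J hJ).1) hiso
  have hsub : ∀ K ∈ T, K ⊆ unionT T := fun K hK b hb => mem_unionT.2 ⟨K, hK, hb⟩
  refine ⟨hV, ?_, fun J hJ => ⟨hTc J hJ, hsub J hJ⟩, hT.2.1,
    fun J hJ _ h => hT.2.2 J (mem_JconnF.2 hJ) h⟩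
  by_contra hc
  rw [full_iff hiso] at hc
  have hne : (Finset.univ.filter
      (fun a : SIdx n => a ∉ unionT T ∧ negS a ∉ unionT T)).Nonempty := by
    push Not at hc
    obtain ⟨a, ha⟩ := hc
    exact ⟨a, by simpa using ha⟩
  obtain ⟨a, ha, hmin⟩ := exists_minimal hP hne
  simp only [Finset.mem_filter, Finset.mem_univ, true_and] at ha hmin
  have hW : IsIdeal P (insert a (unionT T)) := by
    rw [isIdeal_iff hP]
    constructor
    · rw [isotropic_iff] at hiso ⊢
      intro b hb hb'
      rw [Finset.mem_insert] at hb hb'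
      rcases hb with rfl | hb <;> rcases hb' with hb' | hb'
      · have h2 := congrArg Prod.fst hb'
        simp [negS] at h2
      · exact ha.2 hb'
      · rw [← hb', negS_negS] at ha
        exact ha.2 hb
      · exact hiso b hb hb'
    · intro b c hbc hc
      rw [Finset.mem_insert] at *
      right
      rcases hc with rfl | hc
      · by_contra hb
        have h3 : negS b ∈ unionT T := by
          by_contra h3
          exact hmin b ⟨hb, h3⟩ hbc
        exact ha.2 (ideal_down hP hV (sLT_neg hP hbc) h3)
      · exact ideal_down hP hV hbc hc
  have haW : a ∈ insert a (unionT T) := Finset.mem_insert_self _ _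
  have := hT.2.2 (componentIn P (insert a (unionT T)) a)
    (mem_JconnF.2 (comp_connIdeal hP hW haW))
    (fun K hK => comp_triv hW.1 subset_rfl (hTc K hK).2
      ((hsub K hK).trans (Finset.subset_insert _ _)))
  exact ha.1 (mem_unionT.2 ⟨_, this, mem_comp_self haW⟩)

lemma good_sum (hP : IsSignedPoset n P) (x : Fin n → ℝ)
    (hx : ∀ J : Finset (SIdx n), IsIdeal P J → J.Nonempty → dotR x (chiF J) ≠ 0) :
    ∑ f ∈ Finset.univ.filter (fun f : Fin n → SIdx n => GoodSeq P f),
        ∏ m, (dotR x (chiF (preF f m)))⁻¹ =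
      ∑ T ∈ Finset.univ.filter (MaxInd NontrivInter (JconnF n P)),
        ∏ J ∈ T, (dotR x (chiF J))⁻¹ := by
  rw [← Finset.sum_fiberwise_of_maps_to
    (t := Finset.univ.filter (fun U : Finset (SIdx n) => IsIdeal P U ∧ U.card = n))
    (g := fun f : Fin n → SIdx n => Finset.univ.image f)]
  · have h1 : ∀ U ∈ Finset.univ.filter (fun U : Finset (SIdx n) => IsIdeal P U ∧ U.card = n),
        ∑ f ∈ (Finset.univ.filter (fun f : Fin n → SIdx n => GoodSeq P f)).filter
          (fun f => Finset.univ.image f = U), ∏ m, (dotR x (chiF (preF f m)))⁻¹ =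
        ∑ T ∈ Finset.univ.filter (MaxNest P U), ∏ J ∈ T, (dotR x (chiF J))⁻¹ := by
      intro U hU
      simp only [Finset.mem_filter, Finset.mem_univ, true_and] at hU
      have := Asum_eq hP x hx n U hU.1 hU.2
      unfold Asum Gsum at this
      rw [← this, Finset.filter_filter]
    rw [Finset.sum_congr rfl h1, Finset.sum_sigma']
    refine Finset.sum_bij' (fun p _ => p.2) (fun T _ => ⟨unionT T, T⟩) ?_ ?_ ?_ ?_ ?_
    · rintro ⟨U, T⟩ h
      simp only [Finset.mem_sigma, Finset.mem_filter, Finset.mem_univ, true_and] at h ⊢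
      exact nest_to_maxInd hP h.1.1 h.1.2 h.2
    · intro T h
      simp only [Finset.mem_sigma, Finset.mem_filter, Finset.mem_univ, true_and] at h ⊢
      obtain ⟨h1, h2, h3⟩ := maxInd_to_nest hP h
      exact ⟨⟨h1, h2⟩, h3⟩
    · rintro ⟨U, T⟩ h
      simp only [Finset.mem_sigma, Finset.mem_filter, Finset.mem_univ, true_and] at h
      simp only [nest_union hP h.1.1 h.2]
    · intro T h
      rfl
    · rintro ⟨U, T⟩ h
      rfl
  · intro f hf
    simp only [Finset.mem_filter, Finset.mem_univ, true_and] at hf ⊢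
    refine ⟨good_image_ideal hP hf, ?_⟩
    rw [Finset.card_image_of_injective _ hf.1, Finset.card_univ, Fintype.card_fin]

end Final

theorem statement_18 (n : ℕ) (hn : 1 ≤ n) (P : Set (Fin n → ℝ)) (hP : IsSignedPoset n P)
    (hci : NoDoubleNontriv n P) (x : Fin n → ℝ)
    (hx : ∀ J : Finset (SIdx n), IsIdeal P J → J.Nonempty → dotR x (chiF J) ≠ 0) :
    ∑ w ∈ linExts n P, ∏ m : Fin n, (dotR x (chiF (JwSet w m)))⁻¹ =
      (∏ p ∈ PiP n P, pairDot x p) / ∏ J ∈ JconnF n P, dotR x (chiF J) := by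
  have h := matching_sum (α := Finset (SIdx n)) (r := NontrivInter)
    (fun a b h => by
      by_contra h'
      exact triv_symm h' h)
    (fun a h => h.2.1 subset_rfl) (fun J => dotR x (chiF J)) (pairDot x)
    (fun a b => by
      simp [pairDot, dotR, mul_add, Finset.sum_add_distrib])
    _ (JconnF n P) le_rfl
    (fun J hJ => hx J (mem_JconnF.1 hJ).1 (mem_JconnF.1 hJ).2.1)
    (fun A hA B hB C hC => hci A B C (mem_JconnF.1 hA) (mem_JconnF.1 hB) (mem_JconnF.1 hC))
  have hpi : relPairs NontrivInter (JconnF n P) = PiP n P := by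
    ext p
    simp only [relPairs, PiP, inPiP, Finset.mem_filter, Finset.mem_univ, true_and, mem_JconnF]
  rw [linExts_sum hP, good_sum hP x hx, h, hpi]
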